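/- arXiv:2410.10307 — 7 statements merged into one kernel-verified Lean document; each statement's English description precedes it below -/
import Mathlib

section
/- Let λ ∈ ℝ and let φ be a Dirichlet eigenfunction of 𝔏 for λ with ∫_0^π φ² dx = 1. Let p : [0,π] → ℝ be continuously differentiable and q : [0,π] → ℝ continuous, and set I := ∫_0^π (q − (1/2)p') φ² dx. Then there exists a twice continuously differentiable function ψ : [0,π] → ℝ with 𝔏ψ − λψ = (pφ)' − qφ + Iφ on [0,π] and ψ(0) = ψ(π) = 0. -/
/-- The Sturm–Liouville operator `𝔏 u = -(γ u')' + γ₀ u`. -/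
noncomputable def SL (γ γ₀ u : ℝ → ℝ) : ℝ → ℝ :=
  fun x => -(deriv (fun y => γ y * deriv u y) x) + γ₀ x * u x

/-- A Dirichlet eigenfunction of `𝔏` for the eigenvalue `lam`:
a nonzero C² function `φ` with `𝔏 φ = lam φ` on `[0, π]` and `φ 0 = φ π = 0`. -/
def IsDirichletEF (γ γ₀ : ℝ → ℝ) (lam : ℝ) (φ : ℝ → ℝ) : Prop :=
  ContDiff ℝ 2 φ ∧ (∃ x ∈ Set.Icc (0:ℝ) Real.pi, φ x ≠ 0) ∧
  (∀ x ∈ Set.Icc (0:ℝ) Real.pi, SL γ γ₀ φ x = lam * φ x) ∧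
  φ 0 = 0 ∧ φ Real.pi = 0

/-!
The equation `𝔏ψ - λψ = f` with Dirichlet conditions is solvable as soon as `∫ f φ = 0`. To see
this, solve the initial value problem at the right endpoint with `ψ = 0` there. Since `𝔏 - λ` is
symmetric, Green's identity turns the orthogonality into `γ ψ φ' = 0` at the left endpoint, where
`φ' ≠ 0` because `φ` is not the zero solution. For `f = (pφ)' - qφ + Iφ` one has
`f φ = (pφ²/2)' - (q - p'/2)φ² + Iφ²`, so `I` is the value that makes `f` orthogonal to `φ`.
-/

open Set MeasureTheory intervalIntegral
open scoped NNReal BoundedContinuousFunction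

section GlobalPicardLindelof

lemma continuous_comp_of_lipschitzWith {T X Y : Type*} [TopologicalSpace T]
    [PseudoEMetricSpace X] [PseudoEMetricSpace Y] {f : T → X → Y} {α : T → X} {K : ℝ≥0}
    (hlip : ∀ t, LipschitzWith K (f t)) (hcont : ∀ x, Continuous fun t => f t x)
    (hα : Continuous α) : Continuous fun t => f t (α t) :=
  (continuous_prod_of_continuous_lipschitzWith' (fun p : T × X => f p.1 p.2) K hlip hcont).comp
    (continuous_id.prodMk hα)

variable {E : Type*} [NormedAddCommGroup E] [NormedSpace ℝ E]

lemma exists_fixedPoint_of_weighted_contraction [CompleteSpace E] {X : Type*} [TopologicalSpace X]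
    {w : X → ℝ} (hwc : Continuous w) (hw : ∀ t, 0 < w t) {P : (X → E) → X → E} {k : ℝ≥0}
    (hk : k < 1) (hcont : ∀ α, Continuous α → Continuous (P α))
    (hbdd : ∀ α M, (∀ s, ‖α s‖ ≤ M * w s) → ∃ M', ∀ t, ‖P α t‖ ≤ M' * w t)
    (hcontr : ∀ α β M, Continuous α → Continuous β → (∀ s, ‖α s - β s‖ ≤ M * w s) →
      ∀ t, ‖P α t - P β t‖ ≤ k * M * w t) :
    ∃ α, Continuous α ∧ P α = α := by
  have hinv : ∀ {v : E} {c t}, ‖v‖ ≤ c * w t → ‖(w t)⁻¹ • v‖ ≤ c := fun {v c t} h => by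
    rwa [norm_smul, norm_inv, Real.norm_of_nonneg (hw t).le, inv_mul_le_iff₀ (hw t), mul_comm]
  have hsmul : ∀ (y : X →ᵇ E) s, ‖w s • y s‖ ≤ ‖y‖ * w s := fun y s => by
    rw [norm_smul, Real.norm_of_nonneg (hw s).le, mul_comm]
    exact mul_le_mul_of_nonneg_right (y.norm_coe_le_norm s) (hw s).le
  have hwy : ∀ y : X →ᵇ E, Continuous fun s => w s • y s := fun y => hwc.smul y.continuous
  choose M hM using fun y : X →ᵇ E => hbdd _ _ (hsmul y)
  let Φ : (X →ᵇ E) → X →ᵇ E := fun y => .ofNormedAddCommGroup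
    (fun t => (w t)⁻¹ • P (fun s => w s • y s) t)
    ((hwc.inv₀ fun t => (hw t).ne').smul (hcont _ (hwy y))) (M y) fun t => hinv (hM y t)
  have hΦ : ContractingWith k Φ := by
    refine ⟨hk, LipschitzWith.of_dist_le_mul fun y z => ?_⟩
    refine (BoundedContinuousFunction.dist_le (by positivity)).2 fun t => ?_
    rw [dist_eq_norm, dist_eq_norm, BoundedContinuousFunction.coe_ofNormedAddCommGroup,
      BoundedContinuousFunction.coe_ofNormedAddCommGroup, ← smul_sub]
    refine hinv (hcontr _ _ _ (hwy y) (hwy z) (fun s => ?_) t)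
    rw [← smul_sub]
    exact hsmul (y - z) s
  obtain ⟨y, hy⟩ : ∃ y, Φ y = y := ⟨_, hΦ.fixedPoint_isFixedPt⟩
  refine ⟨fun s => w s • y s, hwy y, funext fun t => ?_⟩
  conv_rhs => rw [← hy]
  exact (smul_inv_smul₀ (hw t).ne' _).symm

lemma norm_integral_le_of_norm_le_mul_cosh {h : ℝ → E} {L M t₀ : ℝ} (hL : 0 < L)
    (hh : ∀ s, ‖h s‖ ≤ M * Real.cosh (L * (s - t₀))) (t : ℝ) :
    ‖∫ s in t₀..t, h s‖ ≤ M / L * Real.cosh (L * (t - t₀)) := by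
  have hM : 0 ≤ M := by simpa using (norm_nonneg _).trans (hh t₀)
  have hprim : ∀ s, HasDerivAt (fun s => M / L * Real.sinh (L * (s - t₀)))
      (M * Real.cosh (L * (s - t₀))) s := fun s => by
    refine ((((hasDerivAt_id' s).sub_const t₀).const_mul L).sinh.const_mul (M / L)).congr_deriv ?_
    field_simp
  have hcont : Continuous fun s => M * Real.cosh (L * (s - t₀)) := by fun_prop
  calc ‖∫ s in t₀..t, h s‖
      ≤ |∫ s in t₀..t, M * Real.cosh (L * (s - t₀))| :=
        norm_integral_le_abs_of_norm_le (ae_of_all _ hh) (hcont.intervalIntegrable _ _)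
    _ = M / L * |Real.sinh (L * (t - t₀))| := by
        rw [integral_eq_sub_of_hasDerivAt (fun s _ => hprim s) (hcont.intervalIntegrable _ _)]
        simp [abs_mul, abs_of_nonneg (div_nonneg hM hL.le)]
    _ ≤ M / L * Real.cosh (L * (t - t₀)) := by
        gcongr
        rw [Real.abs_sinh, ← Real.cosh_abs (L * (t - t₀))]
        exact (Real.sinh_lt_cosh _).le

variable {f : ℝ → E → E} {K : ℝ≥0} {C L M t₀ : ℝ} {x₀ : E} {α β : ℝ → E}

lemma norm_picard_le_mul_cosh (hlip : ∀ t, LipschitzWith K (f t)) (hbdd : ∀ t, ‖f t 0‖ ≤ C)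
    (hL : 0 < L) (hα : ∀ s, ‖α s‖ ≤ M * Real.cosh (L * (s - t₀))) (t : ℝ) :
    ‖ODE.picard f t₀ x₀ α t‖ ≤ (‖x₀‖ + (C + K * M) / L) * Real.cosh (L * (t - t₀)) := by
  have hC : 0 ≤ C := (norm_nonneg _).trans (hbdd t)
  have hf : ∀ s, ‖f s (α s)‖ ≤ (C + K * M) * Real.cosh (L * (s - t₀)) := fun s =>
    calc ‖f s (α s)‖ ≤ ‖f s 0‖ + ‖f s (α s) - f s 0‖ := norm_le_norm_add_norm_sub' _ _
      _ ≤ C * Real.cosh (L * (s - t₀)) + K * (M * Real.cosh (L * (s - t₀))) := by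
          refine add_le_add ((hbdd s).trans (le_mul_of_one_le_right hC (Real.one_le_cosh _))) ?_
          refine ((hlip s).norm_sub_le _ _).trans ?_
          rw [sub_zero]
          gcongr
          exact hα s
      _ = (C + K * M) * Real.cosh (L * (s - t₀)) := by ring
  calc ‖ODE.picard f t₀ x₀ α t‖ ≤ ‖x₀‖ + ‖∫ s in t₀..t, f s (α s)‖ := norm_add_le _ _
    _ ≤ ‖x₀‖ * Real.cosh (L * (t - t₀)) + (C + K * M) / L * Real.cosh (L * (t - t₀)) :=
        add_le_add (le_mul_of_one_le_right (norm_nonneg _) (Real.one_le_cosh _))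
          (norm_integral_le_of_norm_le_mul_cosh hL hf t)
    _ = (‖x₀‖ + (C + K * M) / L) * Real.cosh (L * (t - t₀)) := by ring

lemma norm_picard_sub_picard_le_mul_cosh (hlip : ∀ t, LipschitzWith K (f t))
    (hcont : ∀ x, Continuous fun t => f t x) (hαc : Continuous α) (hβc : Continuous β) (hL : 0 < L)
    (hαβ : ∀ s, ‖α s - β s‖ ≤ M * Real.cosh (L * (s - t₀))) (t : ℝ) :
    ‖ODE.picard f t₀ x₀ α t - ODE.picard f t₀ x₀ β t‖ ≤
      K * M / L * Real.cosh (L * (t - t₀)) := by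
  rw [ODE.picard_apply, ODE.picard_apply, add_sub_add_left_eq_sub, ← integral_sub
    ((continuous_comp_of_lipschitzWith hlip hcont hαc).intervalIntegrable _ _)
    ((continuous_comp_of_lipschitzWith hlip hcont hβc).intervalIntegrable _ _)]
  refine norm_integral_le_of_norm_le_mul_cosh hL (fun s => ?_) t
  rw [mul_assoc]
  exact ((hlip s).norm_sub_le _ _).trans (by gcongr; exact hαβ s)

variable [CompleteSpace E]

lemma hasDerivAt_picard (hlip : ∀ t, LipschitzWith K (f t))
    (hcont : ∀ x, Continuous fun t => f t x) (hα : Continuous α) (t : ℝ) :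
    HasDerivAt (ODE.picard f t₀ x₀ α) (f t (α t)) t :=
  ((continuous_comp_of_lipschitzWith hlip hcont hα).integral_hasStrictDerivAt
    t₀ t).hasDerivAt.const_add x₀

-- Picard iteration on `ℝ` contracts the norm `sup_t ‖α t‖ / cosh (L (t - t₀))` once `L > K`.
theorem exists_isIntegralCurve_of_lipschitzWith (hlip : ∀ t, LipschitzWith K (f t))
    (hcont : ∀ x, Continuous fun t => f t x) (hbdd : ∀ t, ‖f t 0‖ ≤ C) (t₀ : ℝ) (x₀ : E) :
    ∃ α : ℝ → E, α t₀ = x₀ ∧ IsIntegralCurve α f := by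
  have hL : (0 : ℝ) < (K + 1 : ℝ≥0) := by positivity
  have hlt : K / (K + 1) < 1 := (div_lt_one (by positivity)).2 (lt_add_one K)
  obtain ⟨α, hα, hfix⟩ := exists_fixedPoint_of_weighted_contraction (P := ODE.picard f t₀ x₀)
    (w := fun t => Real.cosh ((K + 1 : ℝ≥0) * (t - t₀))) (by fun_prop)
    (fun t => Real.cosh_pos _) hlt
    (fun α hα => continuous_iff_continuousAt.2 fun t =>
      (hasDerivAt_picard hlip hcont hα t).continuousAt)
    (fun α M hα => ⟨_, norm_picard_le_mul_cosh hlip hbdd hL hα⟩)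
    (fun α β M hα hβ hαβ t => by
      rw [NNReal.coe_div, div_mul_eq_mul_div]
      exact norm_picard_sub_picard_le_mul_cosh hlip hcont hα hβ hL hαβ t)
  refine ⟨α, by rw [← hfix, ODE.picard_apply₀], fun t => ?_⟩
  simpa only [hfix] using hasDerivAt_picard (t₀ := t₀) (x₀ := x₀) hlip hcont hα t

end GlobalPicardLindelof

section SecondOrderLinear

/-- The matrix of the first-order system for `(u, u')` that is equivalent to the scalar equation
`u'' = a u' + b u`. -/
noncomputable def companion (a b : ℝ) : ℝ × ℝ →L[ℝ] ℝ × ℝ :=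
  (ContinuousLinearMap.snd ℝ ℝ ℝ).prod
    (a • ContinuousLinearMap.snd ℝ ℝ ℝ + b • ContinuousLinearMap.fst ℝ ℝ ℝ)

@[simp]
lemma companion_apply (a b : ℝ) (x : ℝ × ℝ) : companion a b x = (x.2, a * x.2 + b * x.1) := rfl

lemma norm_companion_le (a b : ℝ) : ‖companion a b‖ ≤ 1 + ‖a‖ + ‖b‖ := by
  refine ContinuousLinearMap.opNorm_le_bound _ (by positivity) fun x => ?_
  have hbx : ‖b * x.1‖ ≤ ‖b‖ * ‖x‖ := by rw [norm_mul]; gcongr; exact norm_fst_le x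
  have hax : ‖a * x.2‖ ≤ ‖a‖ * ‖x‖ := by rw [norm_mul]; gcongr; exact norm_snd_le x
  rw [companion_apply, norm_prod_le_iff]
  constructor
  · nlinarith [norm_snd_le x, norm_nonneg a, norm_nonneg b, norm_nonneg x]
  · linarith [norm_add_le (a * x.2) (b * x.1), norm_nonneg x]

theorem exists_contDiff_two_deriv_deriv_eq (a b g : ℝ →ᵇ ℝ) (t₀ u₀ v₀ : ℝ) :
    ∃ u : ℝ → ℝ, ContDiff ℝ 2 u ∧ u t₀ = u₀ ∧ deriv u t₀ = v₀ ∧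
      ∀ t, deriv (deriv u) t = a t * deriv u t + b t * u t + g t := by
  let F : ℝ → ℝ × ℝ → ℝ × ℝ := fun t x => companion (a t) (b t) x + (0, g t)
  have hlip : ∀ t, LipschitzWith (1 + ‖a‖₊ + ‖b‖₊) (F t) := fun t =>
    LipschitzWith.of_dist_le_mul fun x y => by
      rw [dist_add_right, dist_eq_norm, dist_eq_norm, ← map_sub]
      refine (companion (a t) (b t)).le_of_opNorm_le ((norm_companion_le _ _).trans ?_) _
      push_cast
      gcongr
      exacts [a.norm_coe_le_norm t, b.norm_coe_le_norm t]
  have hcont : ∀ x, Continuous fun t => F t x := fun x => by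
    simp only [F, companion_apply]
    fun_prop
  have hbdd : ∀ t, ‖F t 0‖ ≤ ‖g‖ := fun t => by
    simpa [F, Prod.norm_def] using g.norm_coe_le_norm t
  obtain ⟨α, hα₀, hα⟩ := exists_isIntegralCurve_of_lipschitzWith hlip hcont hbdd t₀ (u₀, v₀)
  have hsystem : ∀ t, HasDerivAt α ((α t).2, a t * (α t).2 + b t * (α t).1 + g t) t := fun t => by
    simpa [F] using hα t
  have hu : ∀ t, HasDerivAt (fun s => (α s).1) (α t).2 t := fun t =>
    (ContinuousLinearMap.fst ℝ ℝ ℝ).hasFDerivAt.comp_hasDerivAt t (hsystem t)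
  have hv : ∀ t, HasDerivAt (fun s => (α s).2) (a t * (α t).2 + b t * (α t).1 + g t) t := fun t =>
    (ContinuousLinearMap.snd ℝ ℝ ℝ).hasFDerivAt.comp_hasDerivAt t (hsystem t)
  have hα_cont : Continuous α := hα.continuous
  have hdu : deriv (fun s => (α s).1) = fun s => (α s).2 := funext fun t => (hu t).deriv
  have hdv : deriv (fun s => (α s).2) = fun t => a t * (α t).2 + b t * (α t).1 + g t :=
    funext fun t => (hv t).deriv
  refine ⟨fun t => (α t).1, ?_, by simp [hα₀], by simp [hdu, hα₀], fun t => by rw [hdu, hdv]⟩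
  rw [← one_add_one_eq_two, contDiff_succ_iff_deriv, hdu, contDiff_one_iff_deriv, hdv]
  exact ⟨fun t => (hu t).differentiableAt, by simp, fun t => (hv t).differentiableAt, by fun_prop⟩

lemma exists_boundedContinuousFunction_eqOn {X : Type*} [TopologicalSpace X] [T4Space X]
    {s : Set X} (hs : IsCompact s) {f : X → ℝ} (hf : ContinuousOn f s) :
    ∃ g : X →ᵇ ℝ, EqOn g f s := by
  have := isCompact_iff_compactSpace.1 hs
  obtain ⟨g, -, hg⟩ := BoundedContinuousFunction.exists_norm_eq_domRestrict_eq_of_closed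
    (BoundedContinuousFunction.mkOfCompact ⟨s.domRestrict f, hf.domRestrict⟩) hs.isClosed
  exact ⟨g, fun x hx => DFunLike.congr_fun hg ⟨x, hx⟩⟩

theorem exists_contDiff_two_deriv_deriv_eqOn {s : Set ℝ} (hs : IsCompact s) {a b g : ℝ → ℝ}
    (ha : ContinuousOn a s) (hb : ContinuousOn b s) (hg : ContinuousOn g s) (t₀ u₀ v₀ : ℝ) :
    ∃ u : ℝ → ℝ, ContDiff ℝ 2 u ∧ u t₀ = u₀ ∧ deriv u t₀ = v₀ ∧
      ∀ t ∈ s, deriv (deriv u) t = a t * deriv u t + b t * u t + g t := by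
  obtain ⟨a', ha'⟩ := exists_boundedContinuousFunction_eqOn hs ha
  obtain ⟨b', hb'⟩ := exists_boundedContinuousFunction_eqOn hs hb
  obtain ⟨g', hg'⟩ := exists_boundedContinuousFunction_eqOn hs hg
  obtain ⟨u, hu, hu₀, hv₀, hode⟩ := exists_contDiff_two_deriv_deriv_eq a' b' g' t₀ u₀ v₀
  exact ⟨u, hu, hu₀, hv₀, fun t ht => by rw [hode, ha' ht, hb' ht, hg' ht]⟩

theorem eqOn_zero_of_deriv_deriv_eq {l r : ℝ} {a b u : ℝ → ℝ} (ha : ContinuousOn a (Icc l r))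
    (hb : ContinuousOn b (Icc l r)) (hu : ContDiff ℝ 2 u)
    (hode : ∀ t ∈ Icc l r, deriv (deriv u) t = a t * deriv u t + b t * u t)
    (hu₀ : u l = 0) (hv₀ : deriv u l = 0) : EqOn u 0 (Icc l r) := by
  obtain ⟨A, hA⟩ := isCompact_Icc.exists_bound_of_continuousOn ha
  obtain ⟨B, hB⟩ := isCompact_Icc.exists_bound_of_continuousOn hb
  have hderiv : ∀ t ∈ Icc l r, HasDerivAt (fun t => (u t, deriv u t))
      (companion (a t) (b t) (u t, deriv u t)) t := fun t ht => by
    rw [companion_apply, ← hode t ht]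
    exact (hu.differentiable two_ne_zero t).hasDerivAt.prodMk
      (hu.differentiable_deriv_two t).hasDerivAt
  have hzero := eq_zero_of_abs_deriv_le_mul_abs_self_of_eq_zero_right (K := 1 + A + B)
    (fun t ht => (hderiv t ht).continuousAt.continuousWithinAt)
    (fun t ht => (hderiv t (Ico_subset_Icc_self ht)).hasDerivWithinAt) (by simp [hu₀, hv₀])
    fun t ht => (companion (a t) (b t)).le_of_opNorm_le ((norm_companion_le _ _).trans (by
      gcongr
      exacts [hA t (Ico_subset_Icc_self ht), hB t (Ico_subset_Icc_self ht)])) _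
  exact fun t ht => congrArg Prod.fst (hzero t ht)

end SecondOrderLinear

section SturmLiouville

variable {γ γ₀ f u v φ : ℝ → ℝ} {a b : ℝ}

lemma SL_eq_iff {x : ℝ} (hγ : DifferentiableAt ℝ γ x) (hγx : γ x ≠ 0)
    (hu : DifferentiableAt ℝ (deriv u) x) (y : ℝ) :
    SL γ γ₀ u x = y ↔
      deriv (deriv u) x = -(deriv γ x / γ x) * deriv u x + γ₀ x / γ x * u x + -(y / γ x) := by
  rw [SL, deriv_fun_mul hγ hu]
  field_simp
  constructor <;> intro h <;> linarith

lemma SL_sub_const (lam x : ℝ) : SL γ (fun x => γ₀ x - lam) u x = SL γ γ₀ u x - lam * u x := by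
  rw [SL, SL]
  ring

lemma continuousOn_deriv_div_self {s : Set ℝ} (hγ : ContDiff ℝ 1 γ) (hγs : ∀ x ∈ s, γ x ≠ 0) :
    ContinuousOn (fun x => -(deriv γ x / γ x)) s :=
  (hγ.continuous_deriv_one.continuousOn.div hγ.continuous.continuousOn hγs).neg

theorem exists_SL_eqOn {s : Set ℝ} (hs : IsCompact s) (hγ : ContDiff ℝ 1 γ)
    (hγs : ∀ x ∈ s, γ x ≠ 0) (hγ₀ : ContinuousOn γ₀ s) (hf : ContinuousOn f s) (t₀ u₀ v₀ : ℝ) :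
    ∃ u : ℝ → ℝ, ContDiff ℝ 2 u ∧ u t₀ = u₀ ∧ deriv u t₀ = v₀ ∧ EqOn (SL γ γ₀ u) f s := by
  have hγc := hγ.continuous.continuousOn (s := s)
  obtain ⟨u, hu, hu₀, hv₀, hode⟩ := exists_contDiff_two_deriv_deriv_eqOn hs
    (continuousOn_deriv_div_self hγ hγs) (hγ₀.div hγc hγs) (hf.div hγc hγs).neg t₀ u₀ v₀
  exact ⟨u, hu, hu₀, hv₀, fun x hx => (SL_eq_iff (hγ.differentiable one_ne_zero x) (hγs x hx)
    (hu.differentiable_deriv_two x) _).2 (hode x hx)⟩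

theorem eqOn_zero_of_SL_eqOn_zero (hγ : ContDiff ℝ 1 γ) (hγne : ∀ x ∈ Icc a b, γ x ≠ 0)
    (hγ₀ : ContinuousOn γ₀ (Icc a b)) (hu : ContDiff ℝ 2 u) (hSL : EqOn (SL γ γ₀ u) 0 (Icc a b))
    (hu₀ : u a = 0) (hv₀ : deriv u a = 0) : EqOn u 0 (Icc a b) :=
  eqOn_zero_of_deriv_deriv_eq (continuousOn_deriv_div_self hγ hγne)
    (hγ₀.div hγ.continuous.continuousOn hγne) hu
    (fun x hx => by
      simpa using (SL_eq_iff (hγ.differentiable one_ne_zero x) (hγne x hx)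
        (hu.differentiable_deriv_two x) 0).1 (hSL hx))
    hu₀ hv₀

/-- The modified Wronskian `γ (u v' - u' v)`, the boundary term in Green's identity for
`SL γ γ₀`. -/
noncomputable def modifiedWronskian (γ u v : ℝ → ℝ) : ℝ → ℝ :=
  fun x => u x * (γ x * deriv v x) - γ x * deriv u x * v x

lemma hasDerivAt_modifiedWronskian {x : ℝ} (hu : DifferentiableAt ℝ u x)
    (hv : DifferentiableAt ℝ v x) (hγu : DifferentiableAt ℝ (fun y => γ y * deriv u y) x)
    (hγv : DifferentiableAt ℝ (fun y => γ y * deriv v y) x) :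
    HasDerivAt (modifiedWronskian γ u v) (SL γ γ₀ u x * v x - u x * SL γ γ₀ v x) x := by
  refine ((hu.hasDerivAt.fun_mul hγv.hasDerivAt).fun_sub
    (hγu.hasDerivAt.fun_mul hv.hasDerivAt)).congr_deriv ?_
  rw [SL, SL]
  ring

theorem integral_SL_mul_sub_mul_SL (hγ : ContDiff ℝ 1 γ) (hu : ContDiff ℝ 2 u)
    (hv : ContDiff ℝ 2 v) (a b : ℝ) :
    ∫ x in a..b, (SL γ γ₀ u x * v x - u x * SL γ γ₀ v x) =
      modifiedWronskian γ u v b - modifiedWronskian γ u v a := by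
  have hγu : ContDiff ℝ 1 fun x => γ x * deriv u x := hγ.mul hu.deriv'
  have hγv : ContDiff ℝ 1 fun x => γ x * deriv v x := hγ.mul hv.deriv'
  have hW : ContDiff ℝ 1 (modifiedWronskian γ u v) :=
    ((hu.of_le one_le_two).mul hγv).sub (hγu.mul (hv.of_le one_le_two))
  have hderiv : deriv (modifiedWronskian γ u v) = fun x => SL γ γ₀ u x * v x - u x * SL γ γ₀ v x :=
    funext fun x => (hasDerivAt_modifiedWronskian (hu.differentiable two_ne_zero x)
      (hv.differentiable two_ne_zero x) (hγu.differentiable one_ne_zero x)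
      (hγv.differentiable one_ne_zero x)).deriv
  rw [← hderiv]
  exact integral_deriv_eq_sub (fun x _ => hW.differentiable one_ne_zero x)
    (hW.continuous_deriv_one.intervalIntegrable _ _)

theorem exists_dirichlet_SL_eqOn_of_integral_mul_eq_zero (hγ : ContDiff ℝ 1 γ)
    (hγne : ∀ x ∈ Icc a b, γ x ≠ 0) (hγ₀ : ContinuousOn γ₀ (Icc a b))
    (hf : ContinuousOn f (Icc a b)) (hφ : ContDiff ℝ 2 φ) (hφne : ∃ x ∈ Icc a b, φ x ≠ 0)
    (hSLφ : EqOn (SL γ γ₀ φ) 0 (Icc a b)) (hφa : φ a = 0) (hφb : φ b = 0)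
    (horth : ∫ x in a..b, f x * φ x = 0) :
    ∃ ψ : ℝ → ℝ, ContDiff ℝ 2 ψ ∧ EqOn (SL γ γ₀ ψ) f (Icc a b) ∧ ψ a = 0 ∧ ψ b = 0 := by
  obtain ⟨x₀, hx₀, hφx₀⟩ := hφne
  have hab : a ≤ b := hx₀.1.trans hx₀.2
  have hφ'a : deriv φ a ≠ 0 := fun h =>
    hφx₀ (eqOn_zero_of_SL_eqOn_zero hγ hγne hγ₀ hφ hSLφ hφa h hx₀)
  obtain ⟨ψ, hψ, hψb, -, hSLψ⟩ := exists_SL_eqOn isCompact_Icc hγ hγne hγ₀ hf b 0 0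
  have hgreen : modifiedWronskian γ ψ φ b - modifiedWronskian γ ψ φ a = 0 := by
    rw [← integral_SL_mul_sub_mul_SL (γ₀ := γ₀) hγ hψ hφ, ← horth]
    refine integral_congr fun x hx => ?_
    rw [uIcc_of_le hab] at hx
    simp [hSLψ hx, hSLφ hx]
  have hψa : ψ a * (γ a * deriv φ a) = 0 := by
    simpa [modifiedWronskian, hψb, hφa, hφb] using hgreen
  exact ⟨ψ, hψ, hSLψ,
    (mul_eq_zero.1 hψa).resolve_right (mul_ne_zero (hγne a (left_mem_Icc.2 hab)) hφ'a), hψb⟩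

lemma integral_deriv_mul_sub_add_mul_self {p q : ℝ → ℝ} (hp : ContDiff ℝ 1 p)
    (hq : ContinuousOn q (uIcc a b)) (hφ : ContDiff ℝ 1 φ) (hφa : φ a = 0) (hφb : φ b = 0)
    (I : ℝ) :
    ∫ x in a..b, (deriv (fun y => p y * φ y) x - q x * φ x + I * φ x) * φ x =
      I * (∫ x in a..b, φ x ^ 2) - ∫ x in a..b, (q x - 1 / 2 * deriv p x) * φ x ^ 2 := by
  have hφc := hφ.continuous
  have hpφ : ContDiff ℝ 1 fun x => p x * φ x ^ 2 / 2 := (hp.mul (hφ.pow 2)).div_const 2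
  have hexact : ∀ x, deriv (fun y => p y * φ y ^ 2 / 2) x =
      deriv (fun y => p y * φ y) x * φ x - 1 / 2 * deriv p x * φ x ^ 2 := fun x => by
    have hpx := (hp.differentiable one_ne_zero x).hasDerivAt
    have hφx := (hφ.differentiable one_ne_zero x).hasDerivAt
    rw [(hpx.fun_mul hφx).deriv, ((hpx.fun_mul (hφx.fun_pow 2)).div_const 2).deriv]
    push_cast
    ring
  have hzero : ∫ x in a..b, deriv (fun y => p y * φ y ^ 2 / 2) x = 0 := by
    rw [integral_deriv_eq_sub (fun x _ => hpφ.differentiable one_ne_zero x)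
      (hpφ.continuous_deriv_one.intervalIntegrable _ _)]
    simp [hφa, hφb]
  have hqφ_int : IntervalIntegrable (fun x => (q x - 1 / 2 * deriv p x) * φ x ^ 2) volume a b :=
    ContinuousOn.intervalIntegrable (by fun_prop)
  have hIφ_int : IntervalIntegrable (fun x => I * φ x ^ 2) volume a b :=
    Continuous.intervalIntegrable (by fun_prop) _ _
  rw [← zero_add (I * _), ← hzero, ← intervalIntegral.integral_const_mul,
    ← integral_add (hpφ.continuous_deriv_one.intervalIntegrable _ _) hIφ_int,
    ← integral_sub ((hpφ.continuous_deriv_one.intervalIntegrable _ _).add hIφ_int) hqφ_int]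
  refine integral_congr fun x _ => ?_
  simp only [hexact]
  ring

end SturmLiouville

theorem stmt2_general {γ γ₀ φ p q : ℝ → ℝ} {a b lam I : ℝ}
    (hγ : ContDiff ℝ 1 γ) (hγne : ∀ x ∈ Icc a b, γ x ≠ 0) (hγ₀ : ContinuousOn γ₀ (Icc a b))
    (hφ : ContDiff ℝ 2 φ) (hφne : ∃ x ∈ Icc a b, φ x ≠ 0)
    (hSLφ : ∀ x ∈ Icc a b, SL γ γ₀ φ x = lam * φ x) (hφa : φ a = 0) (hφb : φ b = 0)
    (hp : ContDiff ℝ 1 p) (hq : ContinuousOn q (Icc a b))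
    (hI : I * (∫ x in a..b, φ x ^ 2) = ∫ x in a..b, (q x - 1 / 2 * deriv p x) * φ x ^ 2) :
    ∃ ψ : ℝ → ℝ, ContDiff ℝ 2 ψ ∧
      (∀ x ∈ Icc a b,
        SL γ γ₀ ψ x - lam * ψ x = deriv (fun y => p y * φ y) x - q x * φ x + I * φ x) ∧
      ψ a = 0 ∧ ψ b = 0 := by
  have hab : a ≤ b := nonempty_Icc.1 (hφne.imp fun _ => And.left)
  have hφ1 : ContDiff ℝ 1 φ := hφ.of_le one_le_two
  have hφc := hφ.continuous
  have horth := integral_deriv_mul_sub_add_mul_self hp (uIcc_of_le hab ▸ hq) hφ1 hφa hφb I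
  rw [hI, sub_self] at horth
  obtain ⟨ψ, hψ, hSLψ, hψab⟩ := exists_dirichlet_SL_eqOn_of_integral_mul_eq_zero hγ hγne
    (hγ₀.sub (continuousOn_const (c := lam))) (by fun_prop) hφ hφne
    (fun x hx => (SL_sub_const lam x).trans (sub_eq_zero.2 (hSLφ x hx))) hφa hφb horth
  exact ⟨ψ, hψ, fun x hx => (SL_sub_const lam x).symm.trans (hSLψ hx), hψab⟩

theorem stmt2 (γ γ₀ : ℝ → ℝ)
    (hγ : ContDiff ℝ 1 γ) (hγpos : ∀ x ∈ Set.Icc (0:ℝ) Real.pi, 0 < γ x)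
    (hγ₀ : ContinuousOn γ₀ (Set.Icc 0 Real.pi))
    (lam : ℝ) (φ : ℝ → ℝ) (hφ : IsDirichletEF γ γ₀ lam φ)
    (hnorm : ∫ x in (0:ℝ)..Real.pi, (φ x) ^ 2 = 1)
    (p q : ℝ → ℝ) (hp : ContDiff ℝ 1 p) (hq : ContinuousOn q (Set.Icc 0 Real.pi))
    (I : ℝ) (hI : I = ∫ x in (0:ℝ)..Real.pi, (q x - (1/2) * deriv p x) * (φ x) ^ 2) :
    ∃ ψ : ℝ → ℝ, ContDiff ℝ 2 ψ ∧
      (∀ x ∈ Set.Icc (0:ℝ) Real.pi,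
        SL γ γ₀ ψ x - lam * ψ x = deriv (fun y => p y * φ y) x - q x * φ x + I * φ x) ∧
      ψ 0 = 0 ∧ ψ Real.pi = 0 := by
  obtain ⟨hφ2, hφne, hSLφ, hφ0, hφπ⟩ := hφ
  exact stmt2_general hγ (fun x hx => (hγpos x hx).ne') hγ₀ hφ2 hφne hSLφ hφ0 hφπ hp hq
    (by rw [hnorm, mul_one, hI])
end

section
/- Let ω be a nonempty open subset of (0,π), λ ∈ ℝ, φ a Dirichlet eigenfunction of 𝔏 for λ, and ψ a twice continuously differentiable solution of 𝔏ψ = λψ on [0,π] that is linearly independent from φ. Let F : [0,π] → ℝ be continuous. Then the following are equivalent: (i) there exists a twice continuously differentiable u : [0,π] → ℝ with 𝔏u − λu = F on (0,π), u(0) = u(π) = 0, and u = 0 on ω; (ii) F = 0 on ω, and for every connected component C of the closure of (0,π) \ ω one has ∫_C F φ dx = 0, and moreover ∫_C F ψ dx = 0 whenever C ∩ {0,π} = ∅. -/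
open Set

/-!
If `u = 0` on the open set `ω` then `u` and `u'` vanish on `closure ω`. A component of
`closure ((a, b) \ ω)` is an interval whose endpoints lie in `closure ω` or in `{a, b}`, so
Green's identity `∫ F v = [γ (u v' - u' v)]` kills the integral of `F v` for every solution `v` of
the homogeneous equation for which the bracket vanishes at the endpoints.

Conversely, the orthogonality relations on the components add up to `∫ F φ = 0` on `[a, x]` for
`x ∈ ω ∪ {b}` and to `∫ F ψ = 0` between any two points of `ω`: only countably many components have
nonempty interior, and `F` vanishes off these up to a null set. Hence the solution given by
variation of constants, with `∫ F φ` based at `a` and `∫ F ψ` based at a point of `ω`, vanishes on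
`ω` and at both endpoints.
-/

open MeasureTheory Filter Topology

section ConnectedComponents

variable {X : Type*} [TopologicalSpace X] {K U ω : Set X} {x y : X}

theorem isClosed_connectedComponentIn (hK : IsClosed K) (x : X) :
    IsClosed (connectedComponentIn K x) := by
  by_cases hx : x ∈ K
  · refine closure_subset_iff_isClosed.1 ?_
    exact isPreconnected_connectedComponentIn.closure.subset_connectedComponentIn
      (subset_closure (mem_connectedComponentIn hx))
      (closure_minimal (connectedComponentIn_subset K x) hK)
  · exact connectedComponentIn_eq_empty hx ▸ isClosed_empty

theorem connectedComponentIn_mem_nhds_of_mem_interior [LocallyConnectedSpace X]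
    (hyK : y ∈ interior K) (hyx : y ∈ connectedComponentIn K x) :
    connectedComponentIn K x ∈ 𝓝 y := by
  rw [connectedComponentIn_eq hyx]
  exact connectedComponentIn_mem_nhds (mem_interior_iff_mem_nhds.1 hyK)

theorem pairwiseDisjoint_range_connectedComponentIn (K : Set X) :
    (range (connectedComponentIn K)).PairwiseDisjoint id := by
  rintro _ ⟨x, rfl⟩ _ ⟨y, rfl⟩ hne
  refine disjoint_left.2 fun z hzx hzy => hne ?_
  exact (connectedComponentIn_eq hzx).trans (connectedComponentIn_eq hzy).symm

theorem countable_connectedComponentIn_image_interior [LocallyConnectedSpace X]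
    [TopologicalSpace.SeparableSpace X] (K : Set X) :
    (connectedComponentIn K '' interior K).Countable := by
  refine ((pairwiseDisjoint_range_connectedComponentIn K).subset
    (image_subset_range _ _)).countable_of_nonempty_interior ?_
  rintro _ ⟨x, hx, rfl⟩
  exact ⟨x, mem_interior_iff_mem_nhds.2 (connectedComponentIn_mem_nhds_of_mem_interior hx
    (mem_connectedComponentIn (interior_subset hx)))⟩

theorem integral_eq_zero_of_forall_connectedComponentIn [LocallyConnectedSpace X]
    [TopologicalSpace.SeparableSpace X] [MeasurableSpace X] [OpensMeasurableSpace X]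
    {E : Type*} [NormedAddCommGroup E] [NormedSpace ℝ E] {μ : Measure X} {g : X → E}
    (hK : IsClosed K) (hg : Integrable g μ) (hg0 : ∀ᵐ x ∂μ, x ∉ interior K → g x = 0)
    (hC : ∀ x ∈ interior K, ∫ y in connectedComponentIn K x, g y ∂μ = 0) :
    ∫ x, g x ∂μ = 0 := by
  let T := connectedComponentIn K '' interior K
  have : Countable T := (countable_connectedComponentIn_image_interior K).to_subtype
  have hTmeas : ∀ C : T, MeasurableSet (C : Set X) := by
    rintro ⟨_, x, -, rfl⟩
    exact (isClosed_connectedComponentIn hK x).measurableSet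
  have hTdisj : Pairwise (Function.onFun Disjoint fun C : T => (C : Set X)) := fun C D hCD =>
    pairwiseDisjoint_range_connectedComponentIn K (image_subset_range _ _ C.2)
      (image_subset_range _ _ D.2) (Subtype.coe_ne_coe.2 hCD)
  have hTzero : ∀ C : T, ∫ y in (C : Set X), g y ∂μ = 0 := by
    rintro ⟨_, x, hx, rfl⟩
    exact hC x hx
  have hg0T : ∀ᵐ x ∂μ, x ∉ ⋃ C : T, (C : Set X) → g x = 0 := by
    filter_upwards [hg0] with x hx hxT
    refine hx fun hxK => hxT (mem_iUnion.2 ⟨⟨_, x, hxK, rfl⟩, ?_⟩)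
    exact mem_connectedComponentIn (interior_subset hxK)
  rw [← setIntegral_eq_integral_of_ae_compl_eq_zero hg0T,
    integral_iUnion hTmeas hTdisj hg.integrableOn]
  simp only [hTzero, tsum_zero]

theorem diff_closure_subset_interior_closure_diff (hU : IsOpen U) :
    U \ closure ω ⊆ interior (closure (U \ ω)) :=
  interior_maximal ((sdiff_subset_sdiff_right subset_closure).trans subset_closure)
    (hU.sdiff isClosed_closure)

theorem disjoint_closure_diff (hω : IsOpen ω) : Disjoint ω (closure (U \ ω)) :=
  disjoint_sdiff_right.closure_right hω

end ConnectedComponents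

section Interval

theorem exists_connectedComponentIn_eq_Icc {α : Type*} [ConditionallyCompleteLinearOrder α]
    [TopologicalSpace α] [OrderTopology α] {K : Set α} {x : α} (hK : IsCompact K) (hx : x ∈ K) :
    ∃ c d, c ≤ d ∧ connectedComponentIn K x = Icc c d := by
  have hconn : IsConnected (connectedComponentIn K x) := isConnected_connectedComponentIn_iff.2 hx
  have hcomp : IsCompact (connectedComponentIn K x) :=
    hK.of_isClosed_subset (isClosed_connectedComponentIn hK.isClosed x)
      (connectedComponentIn_subset K x)
  have hIcc := eq_Icc_of_connected_compact hconn hcomp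
  exact ⟨_, _, nonempty_Icc.1 (hIcc ▸ hconn.nonempty), hIcc⟩

theorem endpoints_notMem_interior_of_connectedComponentIn_eq_Icc {α : Type*} [LinearOrder α]
    [TopologicalSpace α] [OrderTopology α] [DenselyOrdered α] [NoMinOrder α] [NoMaxOrder α]
    [LocallyConnectedSpace α] {K : Set α} {c d x : α} (hcd : c ≤ d)
    (h : connectedComponentIn K x = Icc c d) : c ∉ interior K ∧ d ∉ interior K := by
  constructor <;> intro hmem
  · have := connectedComponentIn_mem_nhds_of_mem_interior hmem (h ▸ left_mem_Icc.2 hcd)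
    exact lt_irrefl _ (Icc_mem_nhds_iff.1 (h ▸ this)).1
  · have := connectedComponentIn_mem_nhds_of_mem_interior hmem (h ▸ right_mem_Icc.2 hcd)
    exact lt_irrefl _ (Icc_mem_nhds_iff.1 (h ▸ this)).2

theorem connectedComponentIn_subset_Icc {α : Type*} [LinearOrder α] [TopologicalSpace α]
    [OrderClosedTopology α] {K : Set α} {a b c d x : α} (hK : K ⊆ Icc a b) (hc : c = a ∨ c ∉ K)
    (hd : d = b ∨ d ∉ K) (hx : x ∈ K) (hxcd : x ∈ Icc c d) :
    connectedComponentIn K x ⊆ Icc c d := by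
  have hord : (connectedComponentIn K x).OrdConnected :=
    isPreconnected_connectedComponentIn.ordConnected
  have hxC := mem_connectedComponentIn hx
  have hCK := connectedComponentIn_subset K x
  refine fun z hz => ⟨?_, ?_⟩
  · rcases hc with rfl | hc
    · exact (hK (hCK hz)).1
    · by_contra! hzc
      exact hc (hCK (hord.out hz hxC ⟨hzc.le, hxcd.1⟩))
  · rcases hd with rfl | hd
    · exact (hK (hCK hz)).2
    · by_contra! hdz
      exact hd (hCK (hord.out hxC hz ⟨hxcd.2, hdz.le⟩))

theorem closure_Ioo_diff_subset_Icc {α : Type*} [Preorder α] [TopologicalSpace α]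
    [OrderClosedTopology α] {a b : α} {ω : Set α} : closure (Ioo a b \ ω) ⊆ Icc a b :=
  closure_minimal (sdiff_subset.trans Ioo_subset_Icc_self) isClosed_Icc

variable {ω : Set ℝ} {a b c d x : ℝ}

theorem exists_connectedComponentIn_closure_Ioo_diff_eq_Icc
    (hx : x ∈ closure (Ioo a b \ ω)) :
    ∃ c d, c ≤ d ∧ connectedComponentIn (closure (Ioo a b \ ω)) x = Icc c d ∧
      Icc c d ⊆ Icc a b ∧ c ∈ closure ω ∪ {a, b} ∧ d ∈ closure ω ∪ {a, b} := by
  have hKab : closure (Ioo a b \ ω) ⊆ Icc a b := closure_Ioo_diff_subset_Icc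
  obtain ⟨c, d, hcd, hC⟩ := exists_connectedComponentIn_eq_Icc
    (isCompact_Icc.of_isClosed_subset isClosed_closure hKab) hx
  have hsub : Icc c d ⊆ Icc a b := hC ▸ (connectedComponentIn_subset _ _).trans hKab
  have hmem : ∀ z ∈ Icc a b, z ∉ interior (closure (Ioo a b \ ω)) →
      z ∈ closure ω ∪ {a, b} := by
    intro z hz hzK
    by_contra! hz'
    rw [mem_union, not_or, mem_insert_iff, mem_singleton_iff, not_or] at hz'
    obtain ⟨hzω, hza, hzb⟩ := hz'
    exact hzK (diff_closure_subset_interior_closure_diff isOpen_Ioo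
      ⟨⟨hz.1.lt_of_ne' hza, hz.2.lt_of_ne hzb⟩, hzω⟩)
  obtain ⟨hc, hd⟩ := endpoints_notMem_interior_of_connectedComponentIn_eq_Icc hcd hC
  exact ⟨c, d, hcd, hC, hsub, hmem c (hsub (left_mem_Icc.2 hcd)) hc,
    hmem d (hsub (right_mem_Icc.2 hcd)) hd⟩

theorem intervalIntegral_eq_zero_of_forall_connectedComponentIn {E : Type*}
    [NormedAddCommGroup E] [NormedSpace ℝ E] {μ : Measure ℝ} [NullSingletonClass μ] {g : ℝ → E}
    (hω : IsOpen ω) (hcd : c ≤ d) (hsub : Icc c d ⊆ Icc a b) (hc : c = a ∨ c ∈ ω)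
    (hd : d = b ∨ d ∈ ω)
    (hg : IntegrableOn g (Icc c d) μ) (hg0 : EqOn g 0 (closure ω))
    (hC : ∀ x ∈ closure (Ioo a b \ ω), connectedComponentIn (closure (Ioo a b \ ω)) x ⊆ Icc c d →
      ∫ y in connectedComponentIn (closure (Ioo a b \ ω)) x, g y ∂μ = 0) :
    ∫ y in c..d, g y ∂μ = 0 := by
  set K := closure (Ioo a b \ ω)
  have hωK : ∀ z ∈ ω, z ∉ K := fun z hz => disjoint_left.1 (disjoint_closure_diff hω) hz
  rw [intervalIntegral.integral_of_le hcd, ← integral_Icc_eq_integral_Ioc]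
  refine integral_eq_zero_of_forall_connectedComponentIn (K := K) isClosed_closure hg ?_ ?_
  · rw [← restrict_Ioo_eq_restrict_Icc]
    refine ae_restrict_of_forall_mem measurableSet_Ioo fun z hz hzK => hg0 ?_
    by_contra hzω
    have hzab : z ∈ Ioo a b :=
      ⟨(hsub (left_mem_Icc.2 hcd)).1.trans_lt hz.1, hz.2.trans_le (hsub (right_mem_Icc.2 hcd)).2⟩
    exact hzK (diff_closure_subset_interior_closure_diff isOpen_Ioo ⟨hzab, hzω⟩)
  · intro x hx
    rw [Measure.restrict_restrict (isClosed_connectedComponentIn isClosed_closure x).measurableSet]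
    rcases (connectedComponentIn K x ∩ Icc c d).eq_empty_or_nonempty with hempty | ⟨z, hzx, hz⟩
    · rw [hempty, setIntegral_empty]
    · have hCcd : connectedComponentIn K x ⊆ Icc c d := by
        rw [connectedComponentIn_eq hzx]
        exact connectedComponentIn_subset_Icc closure_Ioo_diff_subset_Icc (hc.imp_right (hωK c))
          (hd.imp_right (hωK d)) (connectedComponentIn_subset K x hzx) hz
      rw [inter_eq_left.2 hCcd]
      exact hC x (interior_subset hx) hCcd

theorem exists_forall_intervalIntegral_eq_zero {E : Type*} [NormedAddCommGroup E]
    [NormedSpace ℝ E] {μ : Measure ℝ} [NullSingletonClass μ] {g : ℝ → E} (hab : a ≤ b)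
    (hω : IsOpen ω) (hωab : ω ⊆ Ioo a b) (hg : IntegrableOn g (Icc a b) μ)
    (hg0 : EqOn g 0 (closure ω))
    (hC : ∀ x ∈ closure (Ioo a b \ ω),
      connectedComponentIn (closure (Ioo a b \ ω)) x ∩ {a, b} = ∅ →
        ∫ y in connectedComponentIn (closure (Ioo a b \ ω)) x, g y ∂μ = 0) :
    ∃ t ∈ Icc a b, ∀ x ∈ ω, ∫ y in t..x, g y ∂μ = 0 := by
  have hle : ∀ c ∈ ω, ∀ d ∈ ω, c ≤ d → ∫ y in c..d, g y ∂μ = 0 := by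
    intro c hc d hd hcd
    have hsub : Icc c d ⊆ Ioo a b := Icc_subset_Ioo (hωab hc).1 (hωab hd).2
    have hsub' : Icc c d ⊆ Icc a b := hsub.trans Ioo_subset_Icc_self
    refine intervalIntegral_eq_zero_of_forall_connectedComponentIn hω hcd hsub' (.inr hc)
      (.inr hd) (hg.mono_set hsub') hg0 fun x hx hxcd => hC x hx ?_
    rw [← disjoint_iff_inter_eq_empty, disjoint_insert_right, disjoint_singleton_right]
    exact ⟨fun ha => lt_irrefl a (hsub (hxcd ha)).1, fun hb => lt_irrefl b (hsub (hxcd hb)).2⟩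
  rcases ω.eq_empty_or_nonempty with rfl | ⟨t, ht⟩
  · exact ⟨a, left_mem_Icc.2 hab, fun x hx => hx.elim⟩
  · refine ⟨t, Ioo_subset_Icc_self (hωab ht), fun x hx => ?_⟩
    rcases le_total t x with htx | hxt
    · exact hle t ht x hx htx
    · rw [intervalIntegral.integral_symm, hle x hx t ht hxt, neg_zero]

end Interval

theorem eqOn_zero_of_hasDerivWithinAt_clm_apply {E : Type*} [NormedAddCommGroup E]
    [NormedSpace ℝ E] {A : ℝ → E →L[ℝ] E} {f : ℝ → E} {a b : ℝ} (hA : ContinuousOn A (Icc a b))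
    (hf : ContinuousOn f (Icc a b))
    (hf' : ∀ x ∈ Ico a b, HasDerivWithinAt f (A x (f x)) (Ici x) x) (ha : f a = 0) :
    EqOn f 0 (Icc a b) := by
  obtain ⟨M, hM⟩ := isCompact_Icc.exists_bound_of_continuousOn hA
  exact eq_zero_of_abs_deriv_le_mul_abs_self_of_eq_zero_right hf hf' ha fun x hx =>
    (A x).le_of_opNorm_le (hM x (Ico_subset_Icc_self hx)) (f x)

theorem contDiff_two_iff_contDiff_one_deriv {𝕜 E : Type*} [NontriviallyNormedField 𝕜]
    [NormedAddCommGroup E] [NormedSpace 𝕜 E] {u : 𝕜 → E} :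
    ContDiff 𝕜 2 u ↔ Differentiable 𝕜 u ∧ ContDiff 𝕜 1 (deriv u) := by
  rw [← one_add_one_eq_two, contDiff_succ_iff_deriv]
  simp

theorem contDiff_one_of_hasDerivAt {𝕜 E : Type*} [NontriviallyNormedField 𝕜]
    [NormedAddCommGroup E] [NormedSpace 𝕜 E] {f f' : 𝕜 → E} (hf : ∀ x, HasDerivAt f (f' x) x)
    (hf' : Continuous f') : ContDiff 𝕜 1 f := by
  refine contDiff_one_iff_deriv.2 ⟨fun x => (hf x).differentiableAt, ?_⟩
  rwa [funext fun x => (hf x).deriv]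

theorem deriv_const_mul_add_const_mul {𝕜 : Type*} [NontriviallyNormedField 𝕜] {u v : 𝕜 → 𝕜}
    (hu : Differentiable 𝕜 u) (hv : Differentiable 𝕜 v) (α β : 𝕜) :
    deriv (fun y => α * u y + β * v y) = fun y => α * deriv u y + β * deriv v y :=
  funext fun x => (((hu x).hasDerivAt.const_mul α).add ((hv x).hasDerivAt.const_mul β)).deriv

theorem exists_continuous_eqOn_Icc {α β : Type*} [LinearOrder α] [TopologicalSpace α]
    [OrderTopology α] [TopologicalSpace β] {F : α → β} {a b : α} (hab : a ≤ b)
    (hF : ContinuousOn F (Icc a b)) : ∃ G : α → β, Continuous G ∧ EqOn G F (Icc a b) :=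
  ⟨IccExtend hab ((Icc a b).domRestrict F), hF.domRestrict.Icc_extend',
    fun _ hx => IccExtend_of_mem hab _ hx⟩

namespace SL

variable {γ γ₀ u v F : ℝ → ℝ} {lam a b c d x : ℝ}

theorem hasDerivAt_flux (hγ : ContDiff ℝ 1 γ) (hu : ContDiff ℝ 2 u) (γ₀ : ℝ → ℝ) (x : ℝ) :
    HasDerivAt (fun y => γ y * deriv u y) (γ₀ x * u x - SL γ γ₀ u x) x := by
  have hflux : ContDiff ℝ 1 fun y => γ y * deriv u y :=
    hγ.mul (contDiff_two_iff_contDiff_one_deriv.1 hu).2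
  refine (hflux.differentiable one_ne_zero x).hasDerivAt.congr_deriv ?_
  simp only [SL]
  ring

theorem congr_of_eventuallyEq (h : u =ᶠ[𝓝 x] v) : SL γ γ₀ u x = SL γ γ₀ v x := by
  have hflux : (fun y => γ y * deriv u y) =ᶠ[𝓝 x] fun y => γ y * deriv v y := by
    filter_upwards [h.deriv] with y hy
    rw [hy]
  simp only [SL, hflux.deriv_eq, h.eq_of_nhds]

theorem zero_apply : SL γ γ₀ 0 x = 0 := by
  simp [SL]

/-- The Lagrange bracket `γ (u v' - u' v)`, the Wronskian of `u` and `v` weighted by `γ` so that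
it is constant for two solutions of `𝔏 u = λ u`. -/
noncomputable def wronskian (γ u v : ℝ → ℝ) (x : ℝ) : ℝ :=
  γ x * (u x * deriv v x - deriv u x * v x)

theorem hasDerivAt_wronskian (hγ : ContDiff ℝ 1 γ) (hu : ContDiff ℝ 2 u) (hv : ContDiff ℝ 2 v)
    (γ₀ : ℝ → ℝ) (x : ℝ) :
    HasDerivAt (wronskian γ u v) (SL γ γ₀ u x * v x - u x * SL γ γ₀ v x) x := by
  have hu' := (hu.differentiable two_ne_zero x).hasDerivAt
  have hv' := (hv.differentiable two_ne_zero x).hasDerivAt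
  have h := (hu'.mul (hasDerivAt_flux hγ hv γ₀ x)).sub ((hasDerivAt_flux hγ hu γ₀ x).mul hv')
  refine (h.congr_deriv (by ring)).congr_of_eventuallyEq (.of_forall fun y => ?_)
  simp only [wronskian, Pi.sub_apply, Pi.mul_apply]
  ring

theorem integral_mul_eq_wronskian_sub (hγ : ContDiff ℝ 1 γ) (hu : ContDiff ℝ 2 u)
    (hv : ContDiff ℝ 2 v) (hcd : c ≤ d)
    (hueq : ∀ x ∈ Ioo c d, SL γ γ₀ u x - lam * u x = F x)
    (hveq : ∀ x ∈ Ioo c d, SL γ γ₀ v x = lam * v x)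
    (hF : ContinuousOn F (Icc c d)) :
    ∫ y in c..d, F y * v y = wronskian γ u v d - wronskian γ u v c := by
  have hderiv := hasDerivAt_wronskian hγ hu hv γ₀
  refine intervalIntegral.integral_eq_sub_of_hasDerivAt_of_le hcd
    (fun x _ => (hderiv x).continuousAt.continuousWithinAt) (fun x hx => ?_)
    ((hF.mul hv.continuous.continuousOn).intervalIntegrable_of_Icc hcd)
  refine (hderiv x).congr_deriv ?_
  rw [hveq x hx, ← hueq x hx]
  ring

theorem wronskian_eq_left (hγ : ContDiff ℝ 1 γ) (hu : ContDiff ℝ 2 u) (hv : ContDiff ℝ 2 v)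
    (hueq : ∀ x ∈ Icc a b, SL γ γ₀ u x = lam * u x)
    (hveq : ∀ x ∈ Icc a b, SL γ γ₀ v x = lam * v x) (hx : x ∈ Icc a b) :
    wronskian γ u v x = wronskian γ u v a := by
  have hsub : Ioo a x ⊆ Icc a b := Ioo_subset_Icc_self.trans (Icc_subset_Icc_right hx.2)
  have h := integral_mul_eq_wronskian_sub (F := 0) hγ hu hv hx.1
    (fun y hy => sub_eq_zero.2 (hueq y (hsub hy))) (fun y hy => hveq y (hsub hy))
    continuousOn_const
  simpa [sub_eq_zero] using h.symm

theorem eqOn_zero_of_initial_eq_zero (hγ : ContDiff ℝ 1 γ) (hγne : ∀ x ∈ Icc a b, γ x ≠ 0)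
    (hγ₀ : ContinuousOn γ₀ (Icc a b)) (hu : ContDiff ℝ 2 u)
    (hueq : ∀ x ∈ Icc a b, SL γ γ₀ u x = lam * u x) (ha : u a = 0) (ha' : deriv u a = 0) :
    EqOn u 0 (Icc a b) := by
  -- `(u, γ u')` solves the first-order system with coefficient matrix `!![0, γ⁻¹; γ₀ - λ, 0]`.
  let A : ℝ → ℝ × ℝ →L[ℝ] ℝ × ℝ := fun x =>
    (γ x)⁻¹ • (ContinuousLinearMap.inl ℝ ℝ ℝ).comp (ContinuousLinearMap.snd ℝ ℝ ℝ) +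
      (γ₀ x - lam) • (ContinuousLinearMap.inr ℝ ℝ ℝ).comp (ContinuousLinearMap.fst ℝ ℝ ℝ)
  have hA : ContinuousOn A (Icc a b) :=
    ((hγ.continuous.continuousOn.inv₀ hγne).smul continuousOn_const).add
      ((hγ₀.sub continuousOn_const).smul continuousOn_const)
  have hsys : ∀ x ∈ Icc a b,
      HasDerivAt (fun y => (u y, γ y * deriv u y)) (A x (u x, γ x * deriv u x)) x := by
    intro x hx
    have hu' := (hu.differentiable two_ne_zero x).hasDerivAt
    refine (hu'.prodMk (hasDerivAt_flux hγ hu γ₀ x)).congr_deriv ?_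
    simp [A, hueq x hx, hγne x hx, sub_mul]
  have hzero := eqOn_zero_of_hasDerivWithinAt_clm_apply hA
    (fun x hx => (hsys x hx).continuousAt.continuousWithinAt)
    (fun x hx => (hsys x (Ico_subset_Icc_self hx)).hasDerivWithinAt) (by simp [ha, ha'])
  exact fun x hx => congrArg Prod.fst (hzero hx)

theorem const_mul_add_const_mul (hγ : ContDiff ℝ 1 γ) (hu : ContDiff ℝ 2 u) (hv : ContDiff ℝ 2 v)
    (α β x : ℝ) :
    SL γ γ₀ (fun y => α * u y + β * v y) x = α * SL γ γ₀ u x + β * SL γ γ₀ v x := by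
  have hflux : (fun y => γ y * (α * deriv u y + β * deriv v y)) =
      fun y => α * (γ y * deriv u y) + β * (γ y * deriv v y) := by
    funext y
    ring
  have h := ((hasDerivAt_flux hγ hu γ₀ x).const_mul α).fun_add
    ((hasDerivAt_flux hγ hv γ₀ x).const_mul β)
  rw [SL, deriv_const_mul_add_const_mul (hu.differentiable two_ne_zero)
      (hv.differentiable two_ne_zero), hflux, h.deriv]
  ring

theorem wronskian_left_ne_zero (hγ : ContDiff ℝ 1 γ) (hγne : ∀ x ∈ Icc a b, γ x ≠ 0)
    (hγ₀ : ContinuousOn γ₀ (Icc a b)) (hab : a ≤ b) (hu : ContDiff ℝ 2 u) (hv : ContDiff ℝ 2 v)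
    (hueq : ∀ x ∈ Icc a b, SL γ γ₀ u x = lam * u x)
    (hveq : ∀ x ∈ Icc a b, SL γ γ₀ v x = lam * v x)
    (hindep : ∀ α β : ℝ, (∀ x ∈ Icc a b, α * u x + β * v x = 0) → α = 0 ∧ β = 0) :
    wronskian γ u v a ≠ 0 := by
  intro hW
  have hdet : u a * deriv v a - deriv u a * v a = 0 :=
    (mul_eq_zero.1 hW).resolve_left (hγne a (left_mem_Icc.2 hab))
  have hker : ∀ α β : ℝ, α * u a + β * v a = 0 → α * deriv u a + β * deriv v a = 0 →
      α = 0 ∧ β = 0 := by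
    intro α β h h'
    have hw : ContDiff ℝ 2 fun y => α * u y + β * v y :=
      (contDiff_const.mul hu).add (contDiff_const.mul hv)
    refine hindep α β (eqOn_zero_of_initial_eq_zero hγ hγne hγ₀ hw (lam := lam) ?_ h ?_)
    · intro x hx
      rw [const_mul_add_const_mul hγ hu hv, hueq x hx, hveq x hx]
      ring
    · rw [deriv_const_mul_add_const_mul (hu.differentiable two_ne_zero)
        (hv.differentiable two_ne_zero)]
      exact h'
  obtain ⟨-, hu'a⟩ := hker (deriv v a) (-deriv u a) (by linarith) (by ring)
  obtain ⟨-, hua⟩ := hker (v a) (-u a) (by ring) (by linarith)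
  rw [neg_eq_zero] at hu'a hua
  exact one_ne_zero (hker 1 0 (by simp [hua]) (by simp [hu'a])).1

section VariationOfConstants

variable {φ ψ A B g : ℝ → ℝ}

theorem hasDerivAt_variation (hφ : DifferentiableAt ℝ φ x) (hψ : DifferentiableAt ℝ ψ x)
    (hA : HasDerivAt A (g x * φ x) x) (hB : HasDerivAt B (g x * ψ x) x) :
    HasDerivAt (fun y => φ y * B y - ψ y * A y) (deriv φ x * B x - deriv ψ x * A x) x :=
  ((hφ.hasDerivAt.mul hB).sub (hψ.hasDerivAt.mul hA)).congr_deriv (by ring)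

theorem deriv_variation (hφ : Differentiable ℝ φ) (hψ : Differentiable ℝ ψ)
    (hA : ∀ x, HasDerivAt A (g x * φ x) x) (hB : ∀ x, HasDerivAt B (g x * ψ x) x) :
    deriv (fun y => φ y * B y - ψ y * A y) = fun y => deriv φ y * B y - deriv ψ y * A y :=
  funext fun x => (hasDerivAt_variation (hφ x) (hψ x) (hA x) (hB x)).deriv

theorem contDiff_variation (hφ : ContDiff ℝ 2 φ) (hψ : ContDiff ℝ 2 ψ) (hg : Continuous g)
    (hA : ∀ x, HasDerivAt A (g x * φ x) x) (hB : ∀ x, HasDerivAt B (g x * ψ x) x) :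
    ContDiff ℝ 2 fun y => φ y * B y - ψ y * A y := by
  have hφ' := contDiff_two_iff_contDiff_one_deriv.1 hφ
  have hψ' := contDiff_two_iff_contDiff_one_deriv.1 hψ
  have hA1 : ContDiff ℝ 1 A := contDiff_one_of_hasDerivAt hA (hg.mul hφ.continuous)
  have hB1 : ContDiff ℝ 1 B := contDiff_one_of_hasDerivAt hB (hg.mul hψ.continuous)
  rw [contDiff_two_iff_contDiff_one_deriv]
  refine ⟨fun x => ?_, ?_⟩
  · exact (hasDerivAt_variation (hφ'.1 x) (hψ'.1 x) (hA x) (hB x)).differentiableAt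
  · rw [deriv_variation hφ'.1 hψ'.1 hA hB]
    exact (hφ'.2.mul hB1).sub (hψ'.2.mul hA1)

theorem variation_sub_eq_mul_wronskian (hγ : ContDiff ℝ 1 γ) (hφ : ContDiff ℝ 2 φ)
    (hψ : ContDiff ℝ 2 ψ) (hA : ∀ x, HasDerivAt A (g x * φ x) x)
    (hB : ∀ x, HasDerivAt B (g x * ψ x) x)
    (hφeq : SL γ γ₀ φ x = lam * φ x) (hψeq : SL γ γ₀ ψ x = lam * ψ x) :
    SL γ γ₀ (fun y => φ y * B y - ψ y * A y) x - lam * (φ x * B x - ψ x * A x) =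
      g x * wronskian γ φ ψ x := by
  have hflux : (fun y => γ y * (deriv φ y * B y - deriv ψ y * A y)) =
      fun y => γ y * deriv φ y * B y - γ y * deriv ψ y * A y := by
    funext y
    ring
  have h := ((hasDerivAt_flux hγ hφ γ₀ x).fun_mul (hB x)).fun_sub
    ((hasDerivAt_flux hγ hψ γ₀ x).fun_mul (hA x))
  rw [SL, deriv_variation (hφ.differentiable two_ne_zero) (hψ.differentiable two_ne_zero) hA hB,
    hflux, h.deriv, hφeq, hψeq, wronskian]
  ring

theorem exists_solution_eq_variation {s t P : ℝ} (hγ : ContDiff ℝ 1 γ) (hφ : ContDiff ℝ 2 φ)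
    (hψ : ContDiff ℝ 2 ψ) (hφeq : ∀ x ∈ Ioo a b, SL γ γ₀ φ x = lam * φ x)
    (hψeq : ∀ x ∈ Ioo a b, SL γ γ₀ ψ x = lam * ψ x)
    (hW : ∀ x ∈ Ioo a b, wronskian γ φ ψ x = P) (hP : P ≠ 0) (hF : ContinuousOn F (Icc a b))
    (hs : s ∈ Icc a b) (ht : t ∈ Icc a b) :
    ∃ u : ℝ → ℝ, ContDiff ℝ 2 u ∧ (∀ x ∈ Ioo a b, SL γ γ₀ u x - lam * u x = F x) ∧
      ∀ x ∈ Icc a b, u x =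
        φ x * (P⁻¹ * ∫ y in t..x, F y * ψ y) - ψ x * (P⁻¹ * ∫ y in s..x, F y * φ y) := by
  obtain ⟨G, hG, hGF⟩ := exists_continuous_eqOn_Icc (hs.1.trans hs.2) hF
  have hprim : ∀ {f : ℝ → ℝ}, Continuous f → ∀ r x,
      HasDerivAt (fun z => P⁻¹ * ∫ y in r..z, G y * f y) (P⁻¹ * G x * f x) x := by
    intro f hf r x
    have h := ((hG.mul hf).integral_hasStrictDerivAt r x).hasDerivAt.const_mul P⁻¹
    exact h.congr_deriv (mul_assoc _ _ _).symm
  have hcongr : ∀ (f : ℝ → ℝ) {r x : ℝ}, r ∈ Icc a b → x ∈ Icc a b →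
      ∫ y in r..x, G y * f y = ∫ y in r..x, F y * f y := fun f _ _ hr hx =>
    intervalIntegral.integral_congr fun y hy => by simp only [hGF (uIcc_subset_Icc hr hx hy)]
  have hA := hprim hφ.continuous s
  have hB := hprim hψ.continuous t
  refine ⟨_, contDiff_variation hφ hψ (continuous_const.mul hG) hA hB, fun x hx => ?_,
    fun x hx => by rw [hcongr ψ ht hx, hcongr φ hs hx]⟩
  rw [variation_sub_eq_mul_wronskian hγ hφ hψ hA hB (hφeq x hx) (hψeq x hx), hW x hx,
    hGF (Ioo_subset_Icc_self hx), mul_right_comm, inv_mul_cancel₀ hP, one_mul]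

end VariationOfConstants

theorem wronskian_eq_zero_of_mem_closure {ω : Set ℝ} (hω : IsOpen ω) (hu : ContDiff ℝ 1 u)
    (huω : EqOn u 0 ω) (hx : x ∈ closure ω) : wronskian γ u v x = 0 := by
  have hux : u x = 0 := huω.closure hu.continuous continuous_const hx
  have hu'ω : EqOn (deriv u) 0 ω := fun y hy => by simpa using huω.deriv hω hy
  have hu'x : deriv u x = 0 :=
    hu'ω.closure (hu.continuous_deriv le_rfl) continuous_const hx
  simp [wronskian, hux, hu'x]

theorem setIntegral_connectedComponentIn_eq_zero {ω : Set ℝ} (hγ : ContDiff ℝ 1 γ)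
    (hω : IsOpen ω) (hu : ContDiff ℝ 2 u) (hv : ContDiff ℝ 2 v)
    (hueq : ∀ x ∈ Ioo a b, SL γ γ₀ u x - lam * u x = F x)
    (hveq : ∀ x ∈ Ioo a b, SL γ γ₀ v x = lam * v x) (hF : ContinuousOn F (Icc a b))
    (huω : EqOn u 0 ω) (hx : x ∈ closure (Ioo a b \ ω))
    (hW : ∀ e ∈ connectedComponentIn (closure (Ioo a b \ ω)) x ∩ {a, b},
      wronskian γ u v e = 0) :
    ∫ y in connectedComponentIn (closure (Ioo a b \ ω)) x, F y * v y = 0 := by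
  obtain ⟨c, d, hcd, hC, hsub, hc, hd⟩ := exists_connectedComponentIn_closure_Ioo_diff_eq_Icc hx
  rw [hC] at hW ⊢
  have hWend : ∀ e ∈ Icc c d, e ∈ closure ω ∪ {a, b} → wronskian γ u v e = 0 := by
    rintro e he (heω | heab)
    · exact wronskian_eq_zero_of_mem_closure hω (hu.of_le one_le_two) huω heω
    · exact hW e ⟨he, heab⟩
  have hIoo : Ioo c d ⊆ Ioo a b :=
    Ioo_subset_Ioo (hsub (left_mem_Icc.2 hcd)).1 (hsub (right_mem_Icc.2 hcd)).2
  rw [integral_Icc_eq_integral_Ioc, ← intervalIntegral.integral_of_le hcd,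
    integral_mul_eq_wronskian_sub hγ hu hv hcd (fun x hx => hueq x (hIoo hx))
      (fun x hx => hveq x (hIoo hx)) (hF.mono hsub),
    hWend c (left_mem_Icc.2 hcd) hc, hWend d (right_mem_Icc.2 hcd) hd, sub_zero]

theorem exists_solution_of_forall_setIntegral_eq_zero {φ ψ : ℝ → ℝ} {ω : Set ℝ} {P : ℝ}
    (hab : a ≤ b) (hγ : ContDiff ℝ 1 γ) (hω : IsOpen ω) (hωab : ω ⊆ Ioo a b)
    (hφ : ContDiff ℝ 2 φ) (hφeq : ∀ x ∈ Ioo a b, SL γ γ₀ φ x = lam * φ x)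
    (hφa : φ a = 0) (hφb : φ b = 0)
    (hψ : ContDiff ℝ 2 ψ) (hψeq : ∀ x ∈ Ioo a b, SL γ γ₀ ψ x = lam * ψ x)
    (hW : ∀ x ∈ Ioo a b, wronskian γ φ ψ x = P) (hP : P ≠ 0)
    (hF : ContinuousOn F (Icc a b)) (hFω : EqOn F 0 ω)
    (hCφ : ∀ x ∈ closure (Ioo a b \ ω),
      ∫ y in connectedComponentIn (closure (Ioo a b \ ω)) x, F y * φ y = 0)
    (hCψ : ∀ x ∈ closure (Ioo a b \ ω),
      connectedComponentIn (closure (Ioo a b \ ω)) x ∩ {a, b} = ∅ →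
        ∫ y in connectedComponentIn (closure (Ioo a b \ ω)) x, F y * ψ y = 0) :
    ∃ u : ℝ → ℝ, ContDiff ℝ 2 u ∧ (∀ x ∈ Ioo a b, SL γ γ₀ u x - lam * u x = F x) ∧
      u a = 0 ∧ u b = 0 ∧ ∀ x ∈ ω, u x = 0 := by
  have hωcl : closure ω ⊆ Icc a b :=
    closure_minimal (hωab.trans Ioo_subset_Icc_self) isClosed_Icc
  have hFcl : EqOn F 0 (closure ω) :=
    hFω.of_subset_closure (hF.mono hωcl) continuousOn_const subset_closure subset_rfl
  have hFmul : ∀ f : ℝ → ℝ, EqOn (fun y => F y * f y) 0 (closure ω) := fun f x hx => by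
    simp [hFcl hx]
  have hFint : ∀ {f : ℝ → ℝ}, Continuous f → IntegrableOn (fun y => F y * f y) (Icc a b) :=
    fun hf => (hF.mul hf.continuousOn).integrableOn_Icc
  have hφint : ∀ x ∈ Icc a b, (x = b ∨ x ∈ ω) → ∫ y in a..x, F y * φ y = 0 := by
    intro x hx hxω
    have hsub : Icc a x ⊆ Icc a b := Icc_subset_Icc_right hx.2
    exact intervalIntegral_eq_zero_of_forall_connectedComponentIn hω hx.1 hsub (.inl rfl) hxω
      ((hFint hφ.continuous).mono_set hsub) (hFmul φ) fun z hz _ => hCφ z hz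
  obtain ⟨t, ht, hψint⟩ := exists_forall_intervalIntegral_eq_zero hab hω hωab
    (hFint hψ.continuous) (hFmul ψ) hCψ
  obtain ⟨u, hu, hueq, hu_eq⟩ := exists_solution_eq_variation hγ hφ hψ hφeq hψeq hW hP hF
    (left_mem_Icc.2 hab) ht
  refine ⟨u, hu, hueq, ?_, ?_, fun x hx => ?_⟩
  · simp [hu_eq a (left_mem_Icc.2 hab), hφa]
  · simp [hu_eq b (right_mem_Icc.2 hab), hφb, hφint b (right_mem_Icc.2 hab) (.inl rfl)]
  · have hxab := Ioo_subset_Icc_self (hωab hx)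
    simp [hu_eq x hxab, hφint x hxab (.inr hx), hψint x hx]

end SL

open SL in
theorem stmt3_general {γ γ₀ φ ψ F : ℝ → ℝ} {ω : Set ℝ} {a b lam : ℝ} (hab : a ≤ b)
    (hγ : ContDiff ℝ 1 γ) (hγne : ∀ x ∈ Icc a b, γ x ≠ 0) (hγ₀ : ContinuousOn γ₀ (Icc a b))
    (hω : IsOpen ω) (hωab : ω ⊆ Ioo a b)
    (hφ : ContDiff ℝ 2 φ) (hφeq : ∀ x ∈ Icc a b, SL γ γ₀ φ x = lam * φ x)
    (hφa : φ a = 0) (hφb : φ b = 0)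
    (hψ : ContDiff ℝ 2 ψ) (hψeq : ∀ x ∈ Icc a b, SL γ γ₀ ψ x = lam * ψ x)
    (hindep : ∀ c d : ℝ, (∀ x ∈ Icc a b, c * φ x + d * ψ x = 0) → c = 0 ∧ d = 0)
    (hF : ContinuousOn F (Icc a b)) :
    (∃ u : ℝ → ℝ, ContDiff ℝ 2 u ∧ (∀ x ∈ Ioo a b, SL γ γ₀ u x - lam * u x = F x) ∧
        u a = 0 ∧ u b = 0 ∧ ∀ x ∈ ω, u x = 0) ↔
      (∀ x ∈ ω, F x = 0) ∧ ∀ x ∈ closure (Ioo a b \ ω),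
        (∫ y in connectedComponentIn (closure (Ioo a b \ ω)) x, F y * φ y = 0) ∧
        (connectedComponentIn (closure (Ioo a b \ ω)) x ∩ {a, b} = ∅ →
          ∫ y in connectedComponentIn (closure (Ioo a b \ ω)) x, F y * ψ y = 0) := by
  have hφeq' : ∀ x ∈ Ioo a b, SL γ γ₀ φ x = lam * φ x := fun x hx =>
    hφeq x (Ioo_subset_Icc_self hx)
  have hψeq' : ∀ x ∈ Ioo a b, SL γ γ₀ ψ x = lam * ψ x := fun x hx =>
    hψeq x (Ioo_subset_Icc_self hx)
  constructor
  · rintro ⟨u, hu, hueq, hua, hub, huω⟩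
    refine ⟨fun x hx => ?_, fun x hx => ⟨?_, fun hempty => ?_⟩⟩
    · have hux : u =ᶠ[𝓝 x] 0 := EqOn.eventuallyEq_of_mem huω (hω.mem_nhds hx)
      rw [← hueq x (hωab hx), congr_of_eventuallyEq hux, zero_apply, huω x hx, mul_zero, sub_zero]
    · refine setIntegral_connectedComponentIn_eq_zero hγ hω hu hφ hueq hφeq' hF huω hx ?_
      rintro e ⟨-, he | he⟩
      · simp [he, wronskian, hua, hφa]
      · simp [mem_singleton_iff.1 he, wronskian, hub, hφb]
    · refine setIntegral_connectedComponentIn_eq_zero hγ hω hu hψ hueq hψeq' hF huω hx ?_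
      simp [hempty]
  · rintro ⟨hFω, hC⟩
    exact exists_solution_of_forall_setIntegral_eq_zero hab hγ hω hωab hφ hφeq' hφa hφb hψ hψeq'
      (fun x hx => wronskian_eq_left hγ hφ hψ hφeq hψeq (Ioo_subset_Icc_self hx))
      (wronskian_left_ne_zero hγ hγne hγ₀ hab hφ hψ hφeq hψeq hindep) hF hFω
      (fun x hx => (hC x hx).1) fun x hx => (hC x hx).2

theorem stmt3 (γ γ₀ : ℝ → ℝ)
    (hγ : ContDiff ℝ 1 γ) (hγpos : ∀ x ∈ Set.Icc (0:ℝ) Real.pi, 0 < γ x)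
    (hγ₀ : ContinuousOn γ₀ (Set.Icc 0 Real.pi))
    (ω : Set ℝ) (hωopen : IsOpen ω) (hωsub : ω ⊆ Set.Ioo 0 Real.pi)
    (hωne : ω.Nonempty)
    (lam : ℝ) (φ : ℝ → ℝ) (hφ : IsDirichletEF γ γ₀ lam φ)
    (ψ : ℝ → ℝ) (hψ : ContDiff ℝ 2 ψ)
    (hψeq : ∀ x ∈ Set.Icc (0:ℝ) Real.pi, SL γ γ₀ ψ x = lam * ψ x)
    (hindep : ∀ c d : ℝ,
      (∀ x ∈ Set.Icc (0:ℝ) Real.pi, c * φ x + d * ψ x = 0) → c = 0 ∧ d = 0)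
    (F : ℝ → ℝ) (hF : ContinuousOn F (Set.Icc 0 Real.pi)) :
    (∃ u : ℝ → ℝ, ContDiff ℝ 2 u ∧
        (∀ x ∈ Set.Ioo (0:ℝ) Real.pi, SL γ γ₀ u x - lam * u x = F x) ∧
        u 0 = 0 ∧ u Real.pi = 0 ∧ (∀ x ∈ ω, u x = 0))
      ↔
    ((∀ x ∈ ω, F x = 0) ∧
      ∀ x ∈ closure (Set.Ioo 0 Real.pi \ ω),
        (∫ y in connectedComponentIn (closure (Set.Ioo 0 Real.pi \ ω)) x,
            F y * φ y = 0) ∧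
        (connectedComponentIn (closure (Set.Ioo 0 Real.pi \ ω)) x
            ∩ ({0, Real.pi} : Set ℝ) = ∅ →
          ∫ y in connectedComponentIn (closure (Set.Ioo 0 Real.pi \ ω)) x,
            F y * ψ y = 0)) := by
  obtain ⟨hφ2, -, hφeq, hφ0, hφpi⟩ := hφ
  exact stmt3_general Real.pi_pos.le hγ (fun x hx => (hγpos x hx).ne') hγ₀ hωopen hωsub hφ2 hφeq
    hφ0 hφpi hψ hψeq hindep hF
end

section
/- Let p : [0,π] → ℝ be continuously differentiable, q : [0,π] → ℝ continuous, λ ∈ ℝ, and let φ be a Dirichlet eigenfunction of 𝔏 for λ with ∫_0^π φ² dx = 1. Set I_λ := ∫_0^π (q − (1/2)p') φ² dx, and let V be the real vector space of pairs (u₁,u₂) of twice continuously differentiable functions on [0,π] with u₁(0) = u₁(π) = u₂(0) = u₂(π) = 0 satisfying 𝔏u₁ + q u₂ − (p u₂)' = λ u₁ and 𝔏u₂ = λ u₂ on (0,π). Then dim V = 1 if I_λ ≠ 0, and dim V = 2 if I_λ = 0. -/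
/-- Membership in the space `V` of pairs `(u₁, u₂)` of C² functions vanishing at `0` and `π`
and satisfying `𝔏u₁ + q u₂ - (p u₂)' = lam u₁` and `𝔏u₂ = lam u₂` on `(0, π)`. -/
noncomputable def MemV (γ γ₀ p q : ℝ → ℝ) (lam : ℝ) (u₁ u₂ : ℝ → ℝ) : Prop :=
  ContDiff ℝ 2 u₁ ∧ ContDiff ℝ 2 u₂ ∧
  u₁ 0 = 0 ∧ u₁ Real.pi = 0 ∧ u₂ 0 = 0 ∧ u₂ Real.pi = 0 ∧
  (∀ x ∈ Set.Ioo (0:ℝ) Real.pi,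
    SL γ γ₀ u₁ x + q x * u₂ x - deriv (fun y => p y * u₂ y) x = lam * u₁ x) ∧
  (∀ x ∈ Set.Ioo (0:ℝ) Real.pi, SL γ γ₀ u₂ x = lam * u₂ x)

/-
Consider the projection `(u₁, u₂) ↦ u₂` on `V`. A solution of `𝔏 u = lam u` vanishing at `0` is
determined by its derivative there, so Dirichlet eigenvalues are simple: the kernel is spanned by
`(φ, 0)` and the image lies in the span of `φ`. Hence `dim V` is `2` or `1` according to whether
`φ` lies in the image, that is, whether `𝔏 u = lam u + ((p φ)' - q φ)` has a Dirichlet solution.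
By the Fredholm alternative this happens exactly when `∫ φ ((p φ)' - q φ) = 0`, and an integration
by parts shows that this integral is `-∫ (q - p' / 2) φ²`. Necessity is Green's identity;
sufficiency is variation of parameters for the first-order system satisfied by `(u, γ u')`.
-/

open Set

section LinearODE

variable {E : Type*} [NormedAddCommGroup E] [NormedSpace ℝ E] {A : ℝ → E →L[ℝ] E} {f : ℝ → E}
  {a b t₀ : ℝ}

theorem eqOn_zero_of_hasDerivWithinAt_clm (hA : ContinuousOn A (Icc a b))
    (hf : ∀ t ∈ Icc a b, HasDerivWithinAt f (A t (f t)) (Icc a b) t)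
    (ht₀ : t₀ ∈ Icc a b) (h₀ : f t₀ = 0) : EqOn f 0 (Icc a b) := by
  obtain ⟨K, hK⟩ := isCompact_Icc.exists_bound_of_continuousOn hA
  have hlip : ∀ t ∈ Icc a b, LipschitzOnWith K.toNNReal (A t) univ := fun t ht ↦
    ((A t).lipschitz.weaken (NNReal.coe_le_coe.1 <|
      (hK t ht).trans (Real.le_coe_toNNReal K))).lipschitzOnWith
  have hfc : ContinuousOn f (Icc a b) := fun t ht ↦ (hf t ht).continuousWithinAt
  have hzero : ∀ (t : ℝ) (s : Set ℝ), HasDerivWithinAt (0 : ℝ → E) (A t ((0 : ℝ → E) t)) s t := by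
    intro t s
    rw [Pi.zero_apply, map_zero]
    exact hasDerivWithinAt_const t s 0
  have hleft : EqOn f 0 (Icc a t₀) := by
    have hsub : Ioc a t₀ ⊆ Ioc a b := Ioc_subset_Ioc_right ht₀.2
    exact ODE_solution_unique_of_mem_Icc_left
      (fun t ht ↦ hlip t (Ioc_subset_Icc_self (hsub ht)))
      (hfc.mono (Icc_subset_Icc_right ht₀.2))
      (fun t ht ↦ (hf t (Ioc_subset_Icc_self (hsub ht))).mono_of_mem_nhdsWithin
        (Icc_mem_nhdsLE_of_mem (hsub ht)))
      (fun _ _ ↦ mem_univ _) continuousOn_const (fun t _ ↦ hzero t _) (fun _ _ ↦ mem_univ _) h₀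
  have hright : EqOn f 0 (Icc t₀ b) := by
    have hsub : Ico t₀ b ⊆ Ico a b := Ico_subset_Ico_left ht₀.1
    exact ODE_solution_unique_of_mem_Icc_right
      (fun t ht ↦ hlip t (Ico_subset_Icc_self (hsub ht)))
      (hfc.mono (Icc_subset_Icc_left ht₀.1))
      (fun t ht ↦ (hf t (Ico_subset_Icc_self (hsub ht))).mono_of_mem_nhdsWithin
        (Icc_mem_nhdsGE_of_mem (hsub ht)))
      (fun _ _ ↦ mem_univ _) continuousOn_const (fun t _ ↦ hzero t _) (fun _ _ ↦ mem_univ _) h₀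
  rw [← Icc_union_Icc_eq_Icc ht₀.1 ht₀.2]
  exact hleft.union hright

end LinearODE

section Primitive

variable {E : Type*} [NormedAddCommGroup E] [NormedSpace ℝ E] [CompleteSpace E] {a b : ℝ}

theorem exists_continuous_eqOn_Icc_s8 {X : Type*} [TopologicalSpace X] {h : ℝ → X} (hab : a ≤ b)
    (hh : ContinuousOn h (Icc a b)) : ∃ H : ℝ → X, Continuous H ∧ EqOn H h (Icc a b) :=
  ⟨IccExtend hab ((Icc a b).domRestrict h),
    (continuousOn_iff_continuous_domRestrict.1 hh).Icc_extend',
    fun _ hx ↦ IccExtend_of_mem hab _ hx⟩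

theorem exists_hasDerivAt_eq_integral {h : ℝ → E} (hab : a ≤ b) (hh : ContinuousOn h (Icc a b)) :
    ∃ F : ℝ → E, ∀ x ∈ Icc a b, HasDerivAt F (h x) x ∧ F x = ∫ t in a..x, h t := by
  obtain ⟨H, hH, hHh⟩ := exists_continuous_eqOn_Icc_s8 hab hh
  refine ⟨fun x ↦ ∫ t in a..x, H t, fun x hx ↦ ⟨?_, ?_⟩⟩
  · rw [← hHh hx]
    exact (hH.integral_hasStrictDerivAt a x).hasDerivAt
  · refine intervalIntegral.integral_congr fun t ht ↦ hHh ?_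
    rw [uIcc_of_le hx.1] at ht
    exact Icc_subset_Icc_right hx.2 ht

theorem exists_contDiff_succ_deriv_eq {n : ℕ} {u V : ℝ → E} (hV : ContDiff ℝ n V)
    (hu : ContinuousOn u (Icc a b)) (hu' : ∀ x ∈ Ioo a b, HasDerivAt u (V x) x) :
    ∃ U : ℝ → E, ContDiff ℝ (n + 1) U ∧ deriv U = V ∧ EqOn U u (Icc a b) := by
  have hU (x : ℝ) : HasDerivAt (fun x ↦ u a + ∫ t in a..x, V t) (V x) x :=
    (hV.continuous.integral_hasStrictDerivAt a x).hasDerivAt.const_add (u a)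
  have hderiv : deriv (fun x ↦ u a + ∫ t in a..x, V t) = V := funext fun x ↦ (hU x).deriv
  refine ⟨_, contDiff_succ_iff_deriv.2 ⟨fun x ↦ (hU x).differentiableAt, by simp, ?_⟩, hderiv,
    fun x hx ↦ ?_⟩
  · rwa [hderiv]
  · have hFTC : ∫ t in a..x, V t = u x - u a :=
      intervalIntegral.integral_eq_sub_of_hasDerivAt_of_le hx.1
        (hu.mono (Icc_subset_Icc_right hx.2)) (fun t ht ↦ hu' t (Ioo_subset_Ioo_right hx.2 ht))
        (hV.continuous.intervalIntegrable a x)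
    simp only [hFTC, add_sub_cancel]

theorem exists_contDiff_two_eqOn {u v h : ℝ → E} (hab : a ≤ b) (hh : ContinuousOn h (Icc a b))
    (hu : ∀ x ∈ Icc a b, HasDerivAt u (v x) x) (hv : ∀ x ∈ Icc a b, HasDerivAt v (h x) x) :
    ∃ U : ℝ → E, ContDiff ℝ 2 U ∧ EqOn U u (Icc a b) ∧ EqOn (deriv U) v (Icc a b) := by
  obtain ⟨H, hH, hHh⟩ := exists_continuous_eqOn_Icc_s8 hab hh
  obtain ⟨V, hV, -, hVv⟩ := exists_contDiff_succ_deriv_eq (n := 0) (contDiff_zero.2 hH)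
    (HasDerivAt.continuousOn hv) fun x hx ↦ by
      rw [hHh (Ioo_subset_Icc_self hx)]
      exact hv x (Ioo_subset_Icc_self hx)
  obtain ⟨U, hU, hUV, hUu⟩ := exists_contDiff_succ_deriv_eq (n := 1) (by simpa using hV)
    (HasDerivAt.continuousOn hu) fun x hx ↦ by
      rw [hVv (Ioo_subset_Icc_self hx)]
      exact hu x (Ioo_subset_Icc_self hx)
  exact ⟨U, by simpa only [Nat.cast_one, one_add_one_eq_two] using hU, hUu, hUV ▸ hVv⟩

end Primitive

section VariationOfParameters

/- The vectors `(φ, P)` and `(-P, φ) / (φ² + P²)` form a frame of determinant one, in which the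
solution `(u, w)` has coordinates `(α, β)`; thus `β` is the Wronskian `φ w - P u`. -/
theorem hasDerivAt_variation_of_parameters {φ P α β : ℝ → ℝ} {g m r x : ℝ}
    (hφ : HasDerivAt φ (g * P x) x) (hP : HasDerivAt P (m * φ x) x)
    (hne : φ x ^ 2 + P x ^ 2 ≠ 0)
    (hα : HasDerivAt α ((m + g) * (φ x ^ 2 - P x ^ 2) * β x / (φ x ^ 2 + P x ^ 2) ^ 2
      - P x * r / (φ x ^ 2 + P x ^ 2)) x)
    (hβ : HasDerivAt β (-(φ x * r)) x) :
    HasDerivAt (fun y ↦ α y * φ y - β y * P y / (φ y ^ 2 + P y ^ 2))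
        (g * (α x * P x + β x * φ x / (φ x ^ 2 + P x ^ 2))) x ∧
      HasDerivAt (fun y ↦ α y * P y + β y * φ y / (φ y ^ 2 + P y ^ 2))
        (m * (α x * φ x - β x * P x / (φ x ^ 2 + P x ^ 2)) - r) x := by
  have hden : HasDerivAt (fun y ↦ φ y ^ 2 + P y ^ 2) (2 * (g + m) * (φ x * P x)) x :=
    ((hφ.fun_pow 2).fun_add (hP.fun_pow 2)).congr_deriv (by push_cast; ring)
  constructor
  · refine ((hα.fun_mul hφ).fun_sub ((hβ.fun_mul hP).fun_div hden hne)).congr_deriv ?_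
    field_simp
    ring
  · refine ((hα.fun_mul hP).fun_add ((hβ.fun_mul hφ).fun_div hden hne)).congr_deriv ?_
    field_simp
    ring

theorem exists_hasDerivAt_planar_of_integral_eq_zero {φ P g m r : ℝ → ℝ} {a b : ℝ} (hab : a ≤ b)
    (hg : ContinuousOn g (Icc a b)) (hm : ContinuousOn m (Icc a b)) (hr : ContinuousOn r (Icc a b))
    (hφ : ∀ x ∈ Icc a b, HasDerivAt φ (g x * P x) x)
    (hP : ∀ x ∈ Icc a b, HasDerivAt P (m x * φ x) x)
    (hne : ∀ x ∈ Icc a b, φ x ^ 2 + P x ^ 2 ≠ 0)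
    (hφa : φ a = 0) (hφb : φ b = 0) (hint : ∫ x in a..b, φ x * r x = 0) :
    ∃ u w : ℝ → ℝ, u a = 0 ∧ u b = 0 ∧
      ∀ x ∈ Icc a b, HasDerivAt u (g x * w x) x ∧ HasDerivAt w (m x * u x - r x) x := by
  have hφc : ContinuousOn φ (Icc a b) := HasDerivAt.continuousOn hφ
  have hPc : ContinuousOn P (Icc a b) := HasDerivAt.continuousOn hP
  obtain ⟨β, hβ⟩ := exists_hasDerivAt_eq_integral (h := fun x ↦ -(φ x * r x)) hab (by fun_prop)
  have hβa : β a = 0 := by simp [(hβ a (left_mem_Icc.2 hab)).2]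
  have hβb : β b = 0 := by
    rw [(hβ b (right_mem_Icc.2 hab)).2, intervalIntegral.integral_neg, hint, neg_zero]
  have hβc : ContinuousOn β (Icc a b) := HasDerivAt.continuousOn fun x hx ↦ (hβ x hx).1
  have hne' : ∀ x ∈ Icc a b, (φ x ^ 2 + P x ^ 2) ^ 2 ≠ 0 := fun x hx ↦ pow_ne_zero 2 (hne x hx)
  obtain ⟨α, hα⟩ := exists_hasDerivAt_eq_integral
    (h := fun x ↦ (m x + g x) * (φ x ^ 2 - P x ^ 2) * β x / (φ x ^ 2 + P x ^ 2) ^ 2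
      - P x * r x / (φ x ^ 2 + P x ^ 2)) hab (by fun_prop (disch := assumption))
  exact ⟨fun x ↦ α x * φ x - β x * P x / (φ x ^ 2 + P x ^ 2),
    fun x ↦ α x * P x + β x * φ x / (φ x ^ 2 + P x ^ 2),
    by simp [hφa, hβa], by simp [hφb, hβb],
    fun x hx ↦ hasDerivAt_variation_of_parameters (hφ x hx) (hP x hx) (hne x hx)
      (hα x hx).1 (hβ x hx).1⟩

end VariationOfParameters

section SturmLiouville

/-- The quasi-derivative `γ u'`, which turns `𝔏 u = lam u + r` into the first-order system
`u' = γ⁻¹ w`, `w' = (γ₀ - lam) u - r` for `(u, w) = (u, γ u')`. -/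
noncomputable def quasiDeriv (γ u : ℝ → ℝ) : ℝ → ℝ := fun x ↦ γ x * deriv u x

variable {γ γ₀ u v : ℝ → ℝ} {lam a b : ℝ}

theorem contDiff_quasiDeriv (hγ : ContDiff ℝ 1 γ) (hu : ContDiff ℝ 2 u) :
    ContDiff ℝ 1 (quasiDeriv γ u) :=
  hγ.mul (ContDiff.deriv' (n := 1) (by simpa only [one_add_one_eq_two] using hu))

theorem hasDerivAt_quasiDeriv (hγ : ContDiff ℝ 1 γ) (hu : ContDiff ℝ 2 u) (x : ℝ) :
    HasDerivAt (quasiDeriv γ u) (γ₀ x * u x - SL γ γ₀ u x) x := by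
  refine ((contDiff_quasiDeriv hγ hu).differentiable one_ne_zero x).hasDerivAt.congr_deriv ?_
  change _ = γ₀ x * u x - (-deriv (quasiDeriv γ u) x + γ₀ x * u x)
  ring

theorem hasDerivAt_inv_mul_quasiDeriv {x : ℝ} (hu : DifferentiableAt ℝ u x) (hγx : γ x ≠ 0) :
    HasDerivAt u ((γ x)⁻¹ * quasiDeriv γ u x) x := by
  rw [quasiDeriv, inv_mul_cancel_left₀ hγx]
  exact hu.hasDerivAt

theorem quasiDeriv_sub_const_mul (hu : Differentiable ℝ u) (hv : Differentiable ℝ v) (c : ℝ) :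
    quasiDeriv γ (fun y ↦ u y - c * v y) = fun y ↦ quasiDeriv γ u y - c * quasiDeriv γ v y := by
  funext y
  have hderiv : deriv (fun y ↦ u y - c * v y) y = deriv u y - c * deriv v y :=
    ((hu y).hasDerivAt.fun_sub ((hv y).hasDerivAt.const_mul c)).deriv
  simp only [quasiDeriv, hderiv]
  ring

theorem SL_sub_const_mul (hγ : ContDiff ℝ 1 γ) (hu : ContDiff ℝ 2 u) (hv : ContDiff ℝ 2 v)
    (c x : ℝ) :
    SL γ γ₀ (fun y ↦ u y - c * v y) x = SL γ γ₀ u x - c * SL γ γ₀ v x := by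
  have huv : ContDiff ℝ 2 (fun y ↦ u y - c * v y) := hu.sub (contDiff_const.mul hv)
  have hsub := hasDerivAt_quasiDeriv (γ₀ := γ₀) hγ huv x
  rw [quasiDeriv_sub_const_mul (hu.differentiable two_ne_zero)
    (hv.differentiable two_ne_zero)] at hsub
  linarith [hsub.unique ((hasDerivAt_quasiDeriv (γ₀ := γ₀) hγ hu x).fun_sub
    ((hasDerivAt_quasiDeriv (γ₀ := γ₀) hγ hv x).const_mul c))]

theorem continuousOn_SL {s : Set ℝ} (hγ : ContDiff ℝ 1 γ) (hu : ContDiff ℝ 2 u)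
    (hγ₀ : ContinuousOn γ₀ s) : ContinuousOn (SL γ γ₀ u) s :=
  (contDiff_quasiDeriv hγ hu).continuous_deriv_one.continuousOn.neg.add
    (hγ₀.mul hu.continuous.continuousOn)

theorem SL_eq_mul_of_mem_Icc (hab : a ≠ b) (hγ : ContDiff ℝ 1 γ)
    (hγ₀ : ContinuousOn γ₀ (Icc a b)) (hu : ContDiff ℝ 2 u)
    (hode : ∀ x ∈ Ioo a b, SL γ γ₀ u x = lam * u x) {x : ℝ} (hx : x ∈ Icc a b) :
    SL γ γ₀ u x = lam * u x :=
  EqOn.of_subset_closure (g := fun y ↦ lam * u y) hode (continuousOn_SL hγ hu hγ₀)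
    (continuous_const.mul hu.continuous).continuousOn Ioo_subset_Icc_self (closure_Ioo hab).ge hx

theorem eqOn_zero_of_SL_eq_mul {x₀ : ℝ} (hab : a < b) (hγ : ContDiff ℝ 1 γ)
    (hγpos : ∀ x ∈ Icc a b, 0 < γ x) (hγ₀ : ContinuousOn γ₀ (Icc a b)) (hu : ContDiff ℝ 2 u)
    (hode : ∀ x ∈ Ioo a b, SL γ γ₀ u x = lam * u x) (hx₀ : x₀ ∈ Icc a b)
    (hux₀ : u x₀ = 0) (hux₀' : quasiDeriv γ u x₀ = 0) : EqOn u 0 (Icc a b) := by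
  let A : ℝ → ℝ × ℝ →L[ℝ] ℝ × ℝ := fun x ↦
    (γ x)⁻¹ • (ContinuousLinearMap.inl ℝ ℝ ℝ ∘L ContinuousLinearMap.snd ℝ ℝ ℝ)
      + (γ₀ x - lam) • (ContinuousLinearMap.inr ℝ ℝ ℝ ∘L ContinuousLinearMap.fst ℝ ℝ ℝ)
  have hγinv : ContinuousOn (fun x ↦ (γ x)⁻¹) (Icc a b) :=
    hγ.continuous.continuousOn.inv₀ fun x hx ↦ (hγpos x hx).ne'
  have hA : ContinuousOn A (Icc a b) := by fun_prop
  have hsol : EqOn (fun x ↦ (u x, quasiDeriv γ u x)) 0 (Icc a b) := by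
    refine eqOn_zero_of_hasDerivWithinAt_clm hA (fun x hx ↦ ?_) hx₀ (Prod.ext hux₀ hux₀')
    have hux := hasDerivAt_inv_mul_quasiDeriv (hu.differentiable two_ne_zero x) (hγpos x hx).ne'
    have hux' := hasDerivAt_quasiDeriv (γ₀ := γ₀) hγ hu x
    refine ((hux.prodMk hux').congr_deriv ?_).hasDerivWithinAt
    simp [A, SL_eq_mul_of_mem_Icc hab.ne hγ hγ₀ hu hode hx, sub_mul]
  exact fun x hx ↦ congrArg Prod.fst (hsol hx)

theorem exists_eq_mul_of_SL_eq_mul (hab : a < b) (hγ : ContDiff ℝ 1 γ)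
    (hγpos : ∀ x ∈ Icc a b, 0 < γ x) (hγ₀ : ContinuousOn γ₀ (Icc a b))
    (hu : ContDiff ℝ 2 u) (hu_ode : ∀ x ∈ Ioo a b, SL γ γ₀ u x = lam * u x) (hua : u a = 0)
    (hu_ne : ∃ x ∈ Icc a b, u x ≠ 0)
    (hv : ContDiff ℝ 2 v) (hv_ode : ∀ x ∈ Ioo a b, SL γ γ₀ v x = lam * v x) (hva : v a = 0) :
    ∃ c : ℝ, ∀ x ∈ Icc a b, v x = c * u x := by
  have ha : a ∈ Icc a b := left_mem_Icc.2 hab.le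
  have hua' : quasiDeriv γ u a ≠ 0 := fun h ↦ by
    obtain ⟨x, hx, hux⟩ := hu_ne
    exact hux (eqOn_zero_of_SL_eq_mul hab hγ hγpos hγ₀ hu hu_ode ha hua h hx)
  let c := quasiDeriv γ v a / quasiDeriv γ u a
  have hdiff_ode : ∀ x ∈ Ioo a b,
      SL γ γ₀ (fun y ↦ v y - c * u y) x = lam * (v x - c * u x) := fun x hx ↦ by
    rw [SL_sub_const_mul hγ hv hu, hv_ode x hx, hu_ode x hx]
    ring
  have hdiff' : quasiDeriv γ (fun y ↦ v y - c * u y) a = 0 := by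
    simp only [quasiDeriv_sub_const_mul (hv.differentiable two_ne_zero)
      (hu.differentiable two_ne_zero), c, div_mul_cancel₀ _ hua', sub_self]
  exact ⟨c, fun x hx ↦ sub_eq_zero.1 <| eqOn_zero_of_SL_eq_mul hab hγ hγpos hγ₀
    (hv.sub (contDiff_const.mul hu)) hdiff_ode ha (by simp [hua, hva]) hdiff' hx⟩

section Fredholm

variable {r : ℝ → ℝ}

theorem integral_mul_SL_sub_mul_SL (hγ : ContDiff ℝ 1 γ) (hu : ContDiff ℝ 2 u)
    (hv : ContDiff ℝ 2 v) :
    ∫ x in a..b, (u x * SL γ γ₀ v x - v x * SL γ γ₀ u x) =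
      (quasiDeriv γ u b * v b - u b * quasiDeriv γ v b)
        - (quasiDeriv γ u a * v a - u a * quasiDeriv γ v a) := by
  have hu' := contDiff_quasiDeriv hγ hu
  have hv' := contDiff_quasiDeriv hγ hv
  have hlagrange : ∀ x, HasDerivAt (fun y ↦ quasiDeriv γ u y * v y - u y * quasiDeriv γ v y)
      (u x * SL γ γ₀ v x - v x * SL γ γ₀ u x) x := fun x ↦
    (((hasDerivAt_quasiDeriv (γ₀ := γ₀) hγ hu x).fun_mul
      (hv.differentiable two_ne_zero x).hasDerivAt).fun_sub
      ((hu.differentiable two_ne_zero x).hasDerivAt.fun_mul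
        (hasDerivAt_quasiDeriv (γ₀ := γ₀) hγ hv x))).congr_deriv
      (by simp only [quasiDeriv]; ring)
  have hC1 : ContDiff ℝ 1 (fun y ↦ quasiDeriv γ u y * v y - u y * quasiDeriv γ v y) :=
    (hu'.mul (hv.of_le one_le_two)).sub ((hu.of_le one_le_two).mul hv')
  refine intervalIntegral.integral_eq_sub_of_hasDerivAt (fun x _ ↦ hlagrange x) ?_
  rw [← funext fun x ↦ (hlagrange x).deriv]
  exact hC1.continuous_deriv_one.intervalIntegrable a b

theorem integral_mul_eq_zero_of_SL_eq (hab : a ≤ b) (hγ : ContDiff ℝ 1 γ)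
    (hu : ContDiff ℝ 2 u) (hu_ode : ∀ x ∈ Ioo a b, SL γ γ₀ u x = lam * u x)
    (hua : u a = 0) (hub : u b = 0)
    (hv : ContDiff ℝ 2 v) (hv_ode : ∀ x ∈ Ioo a b, SL γ γ₀ v x = lam * v x + r x)
    (hva : v a = 0) (hvb : v b = 0) : ∫ x in a..b, u x * r x = 0 := by
  calc ∫ x in a..b, u x * r x
      = ∫ x in a..b, (u x * SL γ γ₀ v x - v x * SL γ γ₀ u x) := by
        refine intervalIntegral.integral_congr_Ioo_of_le hab fun x hx ↦ ?_
        simp only [hu_ode x hx, hv_ode x hx]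
        ring
    _ = 0 := by rw [integral_mul_SL_sub_mul_SL hγ hu hv, hua, hub, hva, hvb]; ring

theorem exists_contDiff_two_of_quasiDeriv_system {w : ℝ → ℝ} (hab : a ≤ b) (hγ : ContDiff ℝ 1 γ)
    (hγpos : ∀ x ∈ Icc a b, 0 < γ x) (hγ₀ : ContinuousOn γ₀ (Icc a b))
    (hr : ContinuousOn r (Icc a b))
    (hu : ∀ x ∈ Icc a b, HasDerivAt u ((γ x)⁻¹ * w x) x)
    (hw : ∀ x ∈ Icc a b, HasDerivAt w ((γ₀ x - lam) * u x - r x) x) :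
    ∃ U : ℝ → ℝ, ContDiff ℝ 2 U ∧ EqOn U u (Icc a b) ∧
      ∀ x ∈ Ioo a b, SL γ γ₀ U x = lam * U x + r x := by
  have huc : ContinuousOn u (Icc a b) := HasDerivAt.continuousOn hu
  have hwc : ContinuousOn w (Icc a b) := HasDerivAt.continuousOn hw
  have hγne : ∀ x ∈ Icc a b, γ x ≠ 0 := fun x hx ↦ (hγpos x hx).ne'
  have hv : ∀ x ∈ Icc a b, HasDerivAt (fun y ↦ (γ y)⁻¹ * w y)
      (-deriv γ x / γ x ^ 2 * w x + (γ x)⁻¹ * ((γ₀ x - lam) * u x - r x)) x := fun x hx ↦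
    ((hγ.differentiable one_ne_zero x).hasDerivAt.fun_inv (hγne x hx)).fun_mul (hw x hx)
  have hγinv : ContinuousOn (fun x ↦ (γ x)⁻¹) (Icc a b) := hγ.continuous.continuousOn.inv₀ hγne
  have hγinv' : ContinuousOn (fun x ↦ -deriv γ x / γ x ^ 2) (Icc a b) :=
    hγ.continuous_deriv_one.continuousOn.neg.div (hγ.continuous.continuousOn.pow 2)
      fun x hx ↦ pow_ne_zero 2 (hγne x hx)
  obtain ⟨U, hU, hUu, hUv⟩ := exists_contDiff_two_eqOn hab (by fun_prop) hu hv
  refine ⟨U, hU, hUu, fun x hx ↦ ?_⟩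
  have hquasi : quasiDeriv γ U =ᶠ[nhds x] w := by
    filter_upwards [Ioo_mem_nhds hx.1 hx.2] with y hy
    rw [quasiDeriv, hUv (Ioo_subset_Icc_self hy),
      mul_inv_cancel_left₀ (hγne y (Ioo_subset_Icc_self hy))]
  have hx' := Ioo_subset_Icc_self hx
  have hUw := (hasDerivAt_quasiDeriv (γ₀ := γ₀) hγ hU x).unique
    ((hw x hx').congr_of_eventuallyEq hquasi)
  rw [hUu hx'] at hUw ⊢
  linarith

theorem exists_SL_eq_of_integral_mul_eq_zero (hab : a < b) (hγ : ContDiff ℝ 1 γ)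
    (hγpos : ∀ x ∈ Icc a b, 0 < γ x) (hγ₀ : ContinuousOn γ₀ (Icc a b))
    (hu : ContDiff ℝ 2 u) (hu_ode : ∀ x ∈ Ioo a b, SL γ γ₀ u x = lam * u x)
    (hua : u a = 0) (hub : u b = 0) (hu_ne : ∃ x ∈ Icc a b, u x ≠ 0)
    (hr : ContinuousOn r (Icc a b)) (hint : ∫ x in a..b, u x * r x = 0) :
    ∃ U : ℝ → ℝ, ContDiff ℝ 2 U ∧ U a = 0 ∧ U b = 0 ∧
      ∀ x ∈ Ioo a b, SL γ γ₀ U x = lam * U x + r x := by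
  have hne : ∀ x ∈ Icc a b, u x ^ 2 + quasiDeriv γ u x ^ 2 ≠ 0 := by
    intro x hx hzero
    obtain ⟨hux, hux'⟩ := (add_eq_zero_iff_of_nonneg (sq_nonneg _) (sq_nonneg _)).1 hzero
    obtain ⟨y, hy, huy⟩ := hu_ne
    exact huy (eqOn_zero_of_SL_eq_mul hab hγ hγpos hγ₀ hu hu_ode hx (sq_eq_zero_iff.1 hux)
      (sq_eq_zero_iff.1 hux') hy)
  have hγinv : ContinuousOn (fun x ↦ (γ x)⁻¹) (Icc a b) :=
    hγ.continuous.continuousOn.inv₀ fun x hx ↦ (hγpos x hx).ne'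
  obtain ⟨v, w, hva, hvb, hvw⟩ := exists_hasDerivAt_planar_of_integral_eq_zero
    (m := fun x ↦ γ₀ x - lam) hab.le hγinv (hγ₀.sub continuousOn_const) hr
    (fun x hx ↦ hasDerivAt_inv_mul_quasiDeriv (hu.differentiable two_ne_zero x) (hγpos x hx).ne')
    (fun x hx ↦ (hasDerivAt_quasiDeriv (γ₀ := γ₀) hγ hu x).congr_deriv <| by
      rw [SL_eq_mul_of_mem_Icc hab.ne hγ hγ₀ hu hu_ode hx, sub_mul])
    hne hua hub hint
  obtain ⟨U, hU, hUv, hU_ode⟩ := exists_contDiff_two_of_quasiDeriv_system hab.le hγ hγpos hγ₀ hr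
    (fun x hx ↦ (hvw x hx).1) (fun x hx ↦ (hvw x hx).2)
  exact ⟨U, hU, (hUv (left_mem_Icc.2 hab.le)).trans hva,
    (hUv (right_mem_Icc.2 hab.le)).trans hvb, hU_ode⟩

end Fredholm

end SturmLiouville

section Coupling

/-- The coupling `(p u)' - q u` through which `u₂` enters the first equation of the system, which
then reads `𝔏 u₁ = lam u₁ + ((p u₂)' - q u₂)`. -/
noncomputable def coupling (p q u : ℝ → ℝ) : ℝ → ℝ :=
  fun x ↦ deriv (fun y ↦ p y * u y) x - q x * u x

variable {p q u v : ℝ → ℝ} {a b : ℝ}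

theorem continuousOn_coupling {s : Set ℝ} (hp : ContDiff ℝ 1 p) (hq : ContinuousOn q s)
    (hu : ContDiff ℝ 1 u) : ContinuousOn (coupling p q u) s :=
  (hp.mul hu).continuous_deriv_one.continuousOn.sub (hq.mul hu.continuous.continuousOn)

theorem coupling_sub_const_mul {x : ℝ} (hp : DifferentiableAt ℝ p x)
    (hu : DifferentiableAt ℝ u x) (hv : DifferentiableAt ℝ v x) (c : ℝ) :
    coupling p q (fun y ↦ u y - c * v y) x = coupling p q u x - c * coupling p q v x := by
  have hu' := hp.hasDerivAt.fun_mul hu.hasDerivAt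
  have hv' := hp.hasDerivAt.fun_mul hv.hasDerivAt
  have huv := hp.hasDerivAt.fun_mul (hu.hasDerivAt.fun_sub (hv.hasDerivAt.const_mul c))
  simp only [coupling, hu'.deriv, hv'.deriv, huv.deriv]
  ring

theorem integral_mul_coupling (hp : ContDiff ℝ 1 p)
    (hq : IntervalIntegrable q MeasureTheory.volume a b) (hu : ContDiff ℝ 1 u)
    (hua : u a = 0) (hub : u b = 0) :
    ∫ x in a..b, u x * coupling p q u x = -∫ x in a..b, (q x - (1 / 2) * deriv p x) * u x ^ 2 := by
  have hp' := hp.continuous_deriv_one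
  have hpd (x : ℝ) := (hp.differentiable one_ne_zero x).hasDerivAt
  have hud (x : ℝ) := (hu.differentiable one_ne_zero x).hasDerivAt
  have hcont : Continuous (fun x ↦ (1 / 2) * deriv p x * u x ^ 2 + p x * (u x * deriv u x)) :=
    ((continuous_const.mul hp').mul (hu.continuous.pow 2)).add
      (hp.continuous.mul (hu.continuous.mul hu.continuous_deriv_one))
  have hexact : ∫ x in a..b, ((1 / 2) * deriv p x * u x ^ 2 + p x * (u x * deriv u x)) = 0 := by
    rw [intervalIntegral.integral_eq_sub_of_hasDerivAt (f := fun x ↦ (1 / 2) * (p x * u x ^ 2))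
      (fun x _ ↦ (((hpd x).fun_mul ((hud x).fun_pow 2)).const_mul (1 / 2)).congr_deriv
        (by push_cast; ring)) (hcont.intervalIntegrable a b), hua, hub]
    ring
  have hint : IntervalIntegrable (fun x ↦ (q x - (1 / 2) * deriv p x) * u x ^ 2)
      MeasureTheory.volume a b :=
    (hq.sub ((continuous_const.mul hp').intervalIntegrable a b)).mul_continuousOn
      (hu.continuous.pow 2).continuousOn
  rw [← zero_sub, ← hexact, ← intervalIntegral.integral_sub (hcont.intervalIntegrable a b) hint]
  refine intervalIntegral.integral_congr fun x _ ↦ ?_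
  simp only [coupling, ((hpd x).fun_mul (hud x)).deriv]
  ring

end Coupling

section SolutionSpace

variable {γ γ₀ p q φ u₁ u₂ v₁ v₂ : ℝ → ℝ} {lam : ℝ}

theorem IsDirichletEF.exists_eq_mul (hφ : IsDirichletEF γ γ₀ lam φ) (hγ : ContDiff ℝ 1 γ)
    (hγpos : ∀ x ∈ Icc 0 Real.pi, 0 < γ x) (hγ₀ : ContinuousOn γ₀ (Icc 0 Real.pi))
    {v : ℝ → ℝ} (hv : ContDiff ℝ 2 v) (hv0 : v 0 = 0)
    (hode : ∀ x ∈ Ioo 0 Real.pi, SL γ γ₀ v x = lam * v x) :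
    ∃ c : ℝ, ∀ x ∈ Icc 0 Real.pi, v x = c * φ x := by
  obtain ⟨hφC2, hφne, hφode, hφ0, -⟩ := hφ
  exact exists_eq_mul_of_SL_eq_mul Real.pi_pos hγ hγpos hγ₀ hφC2
    (fun x hx ↦ hφode x (Ioo_subset_Icc_self hx)) hφ0 hφne hv hode hv0

theorem IsDirichletEF.memV_zero (hφ : IsDirichletEF γ γ₀ lam φ) :
    MemV γ γ₀ p q lam φ (fun _ ↦ 0) := by
  obtain ⟨hφC2, -, hφode, hφ0, hφπ⟩ := hφ
  refine ⟨hφC2, contDiff_const, hφ0, hφπ, rfl, rfl, fun x hx ↦ ?_, fun x _ ↦ by simp [SL]⟩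
  simp [hφode x (Ioo_subset_Icc_self hx)]

theorem IsDirichletEF.exists_memV (hφ : IsDirichletEF γ γ₀ lam φ) (hγ : ContDiff ℝ 1 γ)
    (hγpos : ∀ x ∈ Icc 0 Real.pi, 0 < γ x) (hγ₀ : ContinuousOn γ₀ (Icc 0 Real.pi))
    (hp : ContDiff ℝ 1 p) (hq : ContinuousOn q (Icc 0 Real.pi))
    (hI : ∫ x in (0 : ℝ)..Real.pi, (q x - (1 / 2) * deriv p x) * φ x ^ 2 = 0) :
    ∃ u : ℝ → ℝ, MemV γ γ₀ p q lam u φ := by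
  obtain ⟨hφC2, hφne, hφode, hφ0, hφπ⟩ := hφ
  have hφode' : ∀ x ∈ Ioo 0 Real.pi, SL γ γ₀ φ x = lam * φ x :=
    fun x hx ↦ hφode x (Ioo_subset_Icc_self hx)
  have hφC1 : ContDiff ℝ 1 φ := hφC2.of_le one_le_two
  have hsolvable : ∫ x in (0 : ℝ)..Real.pi, φ x * coupling p q φ x = 0 := by
    rw [integral_mul_coupling hp (hq.intervalIntegrable_of_Icc Real.pi_nonneg) hφC1 hφ0 hφπ, hI,
      neg_zero]
  obtain ⟨u, hu, hu0, huπ, hu_ode⟩ := exists_SL_eq_of_integral_mul_eq_zero Real.pi_pos hγ hγpos hγ₀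
    hφC2 hφode' hφ0 hφπ hφne (continuousOn_coupling hp hq hφC1) hsolvable
  refine ⟨u, hu, hφC2, hu0, huπ, hφ0, hφπ, fun x hx ↦ ?_, hφode'⟩
  rw [hu_ode x hx, coupling]
  ring

theorem MemV.SL_fst_eq (hu : MemV γ γ₀ p q lam u₁ u₂) {x : ℝ} (hx : x ∈ Ioo 0 Real.pi) :
    SL γ γ₀ u₁ x = lam * u₁ x + coupling p q u₂ x := by
  obtain ⟨-, -, -, -, -, -, hode, -⟩ := hu
  rw [coupling]
  linarith [hode x hx]

theorem MemV.sub_const_mul (hγ : ContDiff ℝ 1 γ) (hp : ContDiff ℝ 1 p)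
    (hu : MemV γ γ₀ p q lam u₁ u₂) (hv : MemV γ γ₀ p q lam v₁ v₂) (c : ℝ) :
    MemV γ γ₀ p q lam (fun x ↦ u₁ x - c * v₁ x) (fun x ↦ u₂ x - c * v₂ x) := by
  have hfst := fun x (hx : x ∈ Ioo 0 Real.pi) ↦ And.intro (hu.SL_fst_eq hx) (hv.SL_fst_eq hx)
  obtain ⟨hu₁, hu₂, hu₁0, hu₁π, hu₂0, hu₂π, -, hu_snd⟩ := hu
  obtain ⟨hv₁, hv₂, hv₁0, hv₁π, hv₂0, hv₂π, -, hv_snd⟩ := hv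
  refine ⟨hu₁.sub (contDiff_const.mul hv₁), hu₂.sub (contDiff_const.mul hv₂), by simp [*],
    by simp [*], by simp [*], by simp [*], fun x hx ↦ ?_, fun x hx ↦ ?_⟩
  · have hcoupling := coupling_sub_const_mul (q := q) (hp.differentiable one_ne_zero x)
      (hu₂.differentiable two_ne_zero x) (hv₂.differentiable two_ne_zero x) c
    rw [coupling] at hcoupling
    rw [SL_sub_const_mul hγ hu₁ hv₁, (hfst x hx).1, (hfst x hx).2]
    linarith
  · rw [SL_sub_const_mul hγ hu₂ hv₂, hu_snd x hx, hv_snd x hx]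
    ring

theorem MemV.SL_fst_eq_mul_of_snd_eq_zero (hu : MemV γ γ₀ p q lam u₁ u₂)
    (hu₂ : ∀ x ∈ Icc 0 Real.pi, u₂ x = 0) {x : ℝ} (hx : x ∈ Ioo 0 Real.pi) :
    SL γ γ₀ u₁ x = lam * u₁ x := by
  have hderiv : deriv (fun y ↦ p y * u₂ y) x = deriv (fun _ ↦ 0) x := by
    refine Filter.EventuallyEq.deriv_eq ?_
    filter_upwards [Ioo_mem_nhds hx.1 hx.2] with y hy
    rw [hu₂ y (Ioo_subset_Icc_self hy), mul_zero]
  rw [hu.SL_fst_eq hx, coupling, hderiv, deriv_const, hu₂ x (Ioo_subset_Icc_self hx)]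
  ring

/- Solvability of the first equation, tested against `u₂`, which solves the homogeneous one. -/
theorem MemV.integral_mul_snd_sq_eq_zero (hu : MemV γ γ₀ p q lam u₁ u₂) (hγ : ContDiff ℝ 1 γ)
    (hp : ContDiff ℝ 1 p) (hq : IntervalIntegrable q MeasureTheory.volume 0 Real.pi) :
    ∫ x in (0 : ℝ)..Real.pi, (q x - (1 / 2) * deriv p x) * u₂ x ^ 2 = 0 := by
  have hfst := fun x (hx : x ∈ Ioo 0 Real.pi) ↦ hu.SL_fst_eq hx
  obtain ⟨hu₁, hu₂, hu₁0, hu₁π, hu₂0, hu₂π, -, hsnd⟩ := hu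
  have hsolvable := integral_mul_eq_zero_of_SL_eq Real.pi_nonneg hγ hu₂ hsnd hu₂0 hu₂π
    hu₁ hfst hu₁0 hu₁π
  rwa [integral_mul_coupling hp hq (hu₂.of_le one_le_two) hu₂0 hu₂π, neg_eq_zero] at hsolvable

theorem IsDirichletEF.exists_eq_mul_snd_of_memV (hφ : IsDirichletEF γ γ₀ lam φ)
    (hγ : ContDiff ℝ 1 γ) (hγpos : ∀ x ∈ Icc 0 Real.pi, 0 < γ x)
    (hγ₀ : ContinuousOn γ₀ (Icc 0 Real.pi)) (hv : MemV γ γ₀ p q lam v₁ v₂) :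
    ∃ d : ℝ, ∀ x ∈ Icc 0 Real.pi, v₂ x = d * φ x :=
  have ⟨_, hv₂, _, _, hv₂0, _, _, hsnd⟩ := hv
  hφ.exists_eq_mul hγ hγpos hγ₀ hv₂ hv₂0 hsnd

theorem IsDirichletEF.snd_eq_zero_of_memV (hφ : IsDirichletEF γ γ₀ lam φ) (hγ : ContDiff ℝ 1 γ)
    (hγpos : ∀ x ∈ Icc 0 Real.pi, 0 < γ x) (hγ₀ : ContinuousOn γ₀ (Icc 0 Real.pi))
    (hp : ContDiff ℝ 1 p) (hq : IntervalIntegrable q MeasureTheory.volume 0 Real.pi)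
    (hI : ∫ x in (0 : ℝ)..Real.pi, (q x - (1 / 2) * deriv p x) * φ x ^ 2 ≠ 0)
    (hv : MemV γ γ₀ p q lam v₁ v₂) : ∀ x ∈ Icc 0 Real.pi, v₂ x = 0 := by
  obtain ⟨d, hd⟩ := hφ.exists_eq_mul_snd_of_memV hγ hγpos hγ₀ hv
  have hscaled : d ^ 2 * ∫ x in (0 : ℝ)..Real.pi, (q x - (1 / 2) * deriv p x) * φ x ^ 2 = 0 := by
    rw [← intervalIntegral.integral_const_mul]
    refine (intervalIntegral.integral_congr_Ioo_of_le Real.pi_nonneg fun x hx ↦ ?_).trans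
      (hv.integral_mul_snd_sq_eq_zero hγ hp hq)
    simp only [hd x (Ioo_subset_Icc_self hx)]
    ring
  have hd0 : d = 0 := sq_eq_zero_iff.1 ((mul_eq_zero.1 hscaled).resolve_right hI)
  intro x hx
  rw [hd x hx, hd0, zero_mul]

theorem IsDirichletEF.exists_eq_mul_fst_of_memV (hφ : IsDirichletEF γ γ₀ lam φ)
    (hγ : ContDiff ℝ 1 γ) (hγpos : ∀ x ∈ Icc 0 Real.pi, 0 < γ x)
    (hγ₀ : ContinuousOn γ₀ (Icc 0 Real.pi)) (hv : MemV γ γ₀ p q lam v₁ v₂)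
    (hv₂ : ∀ x ∈ Icc 0 Real.pi, v₂ x = 0) : ∃ c : ℝ, ∀ x ∈ Icc 0 Real.pi, v₁ x = c * φ x :=
  have ⟨hv₁, _, hv₁0, _⟩ := hv
  hφ.exists_eq_mul hγ hγpos hγ₀ hv₁ hv₁0 fun _ hx ↦ hv.SL_fst_eq_mul_of_snd_eq_zero hv₂ hx

theorem IsDirichletEF.exists_eq_add_of_memV (hφ : IsDirichletEF γ γ₀ lam φ) (hγ : ContDiff ℝ 1 γ)
    (hγpos : ∀ x ∈ Icc 0 Real.pi, 0 < γ x) (hγ₀ : ContinuousOn γ₀ (Icc 0 Real.pi))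
    (hp : ContDiff ℝ 1 p) (hu : MemV γ γ₀ p q lam u₁ φ) (hv : MemV γ γ₀ p q lam v₁ v₂) :
    ∃ c d : ℝ, ∀ x ∈ Icc 0 Real.pi, v₁ x = c * φ x + d * u₁ x ∧ v₂ x = d * φ x := by
  obtain ⟨d, hd⟩ := hφ.exists_eq_mul_snd_of_memV hγ hγpos hγ₀ hv
  obtain ⟨c, hc⟩ := hφ.exists_eq_mul_fst_of_memV hγ hγpos hγ₀ (hv.sub_const_mul hγ hp hu d)
    fun x hx ↦ by rw [hd x hx, sub_self]
  exact ⟨c, d, fun x hx ↦ ⟨sub_eq_iff_eq_add.1 (hc x hx), hd x hx⟩⟩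

end SolutionSpace

theorem stmt8 (γ γ₀ : ℝ → ℝ)
    (hγ : ContDiff ℝ 1 γ) (hγpos : ∀ x ∈ Set.Icc (0:ℝ) Real.pi, 0 < γ x)
    (hγ₀ : ContinuousOn γ₀ (Set.Icc 0 Real.pi))
    (p q : ℝ → ℝ) (hp : ContDiff ℝ 1 p) (hq : ContinuousOn q (Set.Icc 0 Real.pi))
    (lam : ℝ) (φ : ℝ → ℝ) (hφ : IsDirichletEF γ γ₀ lam φ)
    (hnorm : ∫ x in (0:ℝ)..Real.pi, (φ x) ^ 2 = 1)
    (I : ℝ) (hI : I = ∫ x in (0:ℝ)..Real.pi, (q x - (1/2) * deriv p x) * (φ x) ^ 2) :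
    -- `dim V = 1` when `I ≠ 0`:
    (I ≠ 0 → ∃ w₁ w₂ : ℝ → ℝ, MemV γ γ₀ p q lam w₁ w₂ ∧
        (∃ x ∈ Set.Icc (0:ℝ) Real.pi, w₁ x ≠ 0 ∨ w₂ x ≠ 0) ∧
        ∀ v₁ v₂ : ℝ → ℝ, MemV γ γ₀ p q lam v₁ v₂ →
          ∃ c : ℝ, ∀ x ∈ Set.Icc (0:ℝ) Real.pi,
            v₁ x = c * w₁ x ∧ v₂ x = c * w₂ x) ∧
    -- `dim V = 2` when `I = 0`:
    (I = 0 → ∃ w₁ w₂ z₁ z₂ : ℝ → ℝ,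
        MemV γ γ₀ p q lam w₁ w₂ ∧ MemV γ γ₀ p q lam z₁ z₂ ∧
        (∀ c d : ℝ,
          (∀ x ∈ Set.Icc (0:ℝ) Real.pi,
            c * w₁ x + d * z₁ x = 0 ∧ c * w₂ x + d * z₂ x = 0) → c = 0 ∧ d = 0) ∧
        ∀ v₁ v₂ : ℝ → ℝ, MemV γ γ₀ p q lam v₁ v₂ →
          ∃ c d : ℝ, ∀ x ∈ Set.Icc (0:ℝ) Real.pi,
            v₁ x = c * w₁ x + d * z₁ x ∧ v₂ x = c * w₂ x + d * z₂ x) := by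
  subst hI
  obtain ⟨y, hy, hφy⟩ := hφ.2.1
  refine ⟨fun hI ↦ ?_, fun hI ↦ ?_⟩
  · refine ⟨φ, fun _ ↦ 0, hφ.memV_zero, ⟨y, hy, Or.inl hφy⟩, fun v₁ v₂ hv ↦ ?_⟩
    have hv₂ := hφ.snd_eq_zero_of_memV hγ hγpos hγ₀ hp
      (hq.intervalIntegrable_of_Icc Real.pi_nonneg) hI hv
    obtain ⟨c, hc⟩ := hφ.exists_eq_mul_fst_of_memV hγ hγpos hγ₀ hv hv₂
    exact ⟨c, fun x hx ↦ ⟨hc x hx, by rw [hv₂ x hx, mul_zero]⟩⟩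
  · obtain ⟨u, hu⟩ := hφ.exists_memV hγ hγpos hγ₀ hp hq hI
    refine ⟨φ, fun _ ↦ 0, u, φ, hφ.memV_zero, hu, fun c d hcd ↦ ?_, fun v₁ v₂ hv ↦ ?_⟩
    · obtain ⟨hfst, hsnd⟩ := hcd y hy
      have hd : d = 0 := by simpa [hφy] using hsnd
      exact ⟨by simpa [hd, hφy] using hfst, hd⟩
    · simpa only [mul_zero, zero_add] using hφ.exists_eq_add_of_memV hγ hγpos hγ₀ hp hu hv
end

section
/- Let λ ∈ ℝ and let φ be a Dirichlet eigenfunction of 𝔏 for λ. Then there exist real numbers 0 < a < b < π and a Lipschitz function p : [0,π] → ℝ such that: p is not identically zero on (a,b); the product pφ is constant on [a,b] (equivalently (pφ)' = 0 on (a,b)); ∫_0^a (pφ)'φ dx = 0; and ∫_b^π (pφ)'φ dx = 0. -/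
/-!
Outside an interval `[a, b] ⊆ (l, r)` on which `φ` has no zero, look for `p` as a function of `φ`,
say `p φ = Q ∘ φ`. Then `∫ (pφ)' φ` is the integral of `t Q' t` between the values of `φ` at the end
points. With `s` the value of `φ` at `a` (or `b`), the quadratic `Q t = 4 (t / s) - 3 (t / s) ^ 2`
satisfies both `∫ t in 0..s, t Q' t = 0` and `Q s = 1`, so that `p` continues `1 / φ` from `[a, b]`
continuously.
-/

open Set MeasureTheory intervalIntegral Topology
open scoped NNReal

section Lipschitz

variable {α 𝕜 E F : Type*} [MetricSpace α] [RCLike 𝕜] [NormedAddCommGroup E] [NormedSpace 𝕜 E]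
  [NormedAddCommGroup F] [NormedSpace 𝕜 F]

theorem exists_lipschitzOnWith_comp_of_contDiffAt {K : ℝ≥0} {s : Set α} {f : α → E} {g : E → F}
    (hs : IsCompact s) (hf : LipschitzOnWith K f s) (hg : ∀ x ∈ s, ContDiffAt 𝕜 1 g (f x)) :
    ∃ K', LipschitzOnWith K' (fun x => g (f x)) s := by
  refine LocallyLipschitzOn.exists_lipschitzOnWith_of_compact hs fun x hx => ?_
  obtain ⟨L, t, ht, hgt⟩ := (hg x hx).exists_lipschitzOnWith
  have hpre : s ∩ f ⁻¹' t ∈ 𝓝[s] x :=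
    Filter.inter_mem self_mem_nhdsWithin (hf.continuousOn x hx ht)
  exact ⟨L * K, s ∩ f ⁻¹' t, hpre, hgt.comp (hf.mono inter_subset_left) fun _ hy => hy.2⟩

end Lipschitz

section Integrals

variable {φ p : ℝ → ℝ} {u v : ℝ}

theorem intervalIntegrable_deriv_mul_mul_self (hp : AbsolutelyContinuousOnInterval p u v)
    (hφ : AbsolutelyContinuousOnInterval φ u v) :
    IntervalIntegrable (fun x => deriv (fun y => p y * φ y) x * φ x) volume u v :=
  (hp.fun_mul hφ).intervalIntegrable_deriv.mul_continuousOn hφ.continuousOn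

theorem integral_deriv_comp_mul_self {K : ℝ≥0} {Q : ℝ → ℝ} (hφ : LipschitzOnWith K φ (uIcc u v))
    (hQ : ContDiff ℝ 1 Q) :
    ∫ x in u..v, deriv (fun y => Q (φ y)) x * φ x = ∫ t in φ u..φ v, deriv Q t * t := by
  have hcont : Continuous fun t => deriv Q t * t := (hQ.continuous_deriv le_rfl).mul continuous_id
  let H : ℝ → ℝ := fun y => ∫ t in φ u..y, deriv Q t * t
  have hH (y : ℝ) : HasDerivAt H (deriv Q y * y) y :=
    (hcont.integral_hasStrictDerivAt _ y).hasDerivAt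
  have hH_contDiff : ContDiff ℝ 1 H := by
    refine contDiff_one_iff_deriv.2 ⟨fun y => (hH y).differentiableAt, ?_⟩
    rwa [funext fun y => (hH y).deriv]
  obtain ⟨_, hHφ⟩ := exists_lipschitzOnWith_comp_of_contDiffAt isCompact_uIcc hφ
    fun _ _ => hH_contDiff.contDiffAt
  have hderiv : ∀ᵐ x, x ∈ uIoc u v →
      deriv (fun y => Q (φ y)) x * φ x = deriv (fun y => H (φ y)) x := by
    filter_upwards [hφ.absolutelyContinuousOnInterval.ae_differentiableAt] with x hx hxuv
    have hφx := (hx (uIoc_subset_uIcc hxuv)).hasDerivAt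
    have hQx := ((hQ.differentiable one_ne_zero) (φ x)).hasDerivAt
    have hQφ : deriv (fun y => Q (φ y)) x = deriv Q (φ x) * deriv φ x := (hQx.comp x hφx).deriv
    have hHφ' : deriv (fun y => H (φ y)) x = deriv Q (φ x) * φ x * deriv φ x :=
      ((hH (φ x)).comp x hφx).deriv
    rw [hQφ, hHφ', mul_right_comm]
  calc ∫ x in u..v, deriv (fun y => Q (φ y)) x * φ x
      = ∫ x in u..v, deriv (fun y => H (φ y)) x := integral_congr_ae hderiv
    _ = H (φ v) - H (φ u) := hHφ.absolutelyContinuousOnInterval.integral_deriv_eq_sub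
    _ = ∫ t in φ u..φ v, deriv Q t * t := by simp only [H, integral_same, sub_zero]

end Integrals

/-- For `s ≠ 0`, the affine function `w` of `t` with `w s = 1 / s` for which the quadratic
`Q t = w t * t` satisfies `∫ t in 0..s, t * Q' t = 0`; it is used to express `p` through `φ`. -/
noncomputable def balancedWeight (s t : ℝ) : ℝ := 4 / s - 3 * t / s ^ 2

theorem balancedWeight_self (s : ℝ) : balancedWeight s s = s⁻¹ := by
  unfold balancedWeight
  grind

theorem contDiffAt_balancedWeight {q : ℝ × ℝ} (hq : q.1 ≠ 0) :
    ContDiffAt ℝ 1 (fun q : ℝ × ℝ => balancedWeight q.1 q.2) q := by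
  unfold balancedWeight
  fun_prop (disch := simpa using hq)

theorem contDiff_balancedWeight_mul_self (s : ℝ) :
    ContDiff ℝ 1 fun t => balancedWeight s t * t := by
  unfold balancedWeight
  fun_prop

theorem integral_deriv_balancedWeight_mul_self (s : ℝ) :
    ∫ t in 0..s, deriv (fun t => balancedWeight s t * t) t * t = 0 := by
  have hderiv (t : ℝ) : deriv (fun t => balancedWeight s t * t) t = 4 / s - 6 / s ^ 2 * t := by
    have h := ((((hasDerivAt_id t).const_mul 3).div_const (s ^ 2)).const_sub (4 / s)).mul
      (hasDerivAt_id t)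
    refine (h.congr_deriv ?_).deriv
    simp only [id_eq]
    ring
  have hprim (t : ℝ) :
      HasDerivAt (fun t => 2 / s * t ^ 2 - 2 / s ^ 2 * t ^ 3) ((4 / s - 6 / s ^ 2 * t) * t) t := by
    refine (((hasDerivAt_pow 2 t).const_mul (2 / s)).sub
      ((hasDerivAt_pow 3 t).const_mul (2 / s ^ 2))).congr_deriv ?_
    norm_num
    ring
  simp only [hderiv]
  rw [integral_eq_sub_of_hasDerivAt (fun t _ => hprim t)
    (Continuous.intervalIntegrable (by fun_prop) _ _)]
  grind

section IntegralBalanced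

variable {K : ℝ≥0} {φ p : ℝ → ℝ} {u v : ℝ}

theorem integral_deriv_mul_mul_self_of_eqOn_balancedWeight {s : ℝ} (huv : u ≤ v)
    (hφ : LipschitzOnWith K φ (Icc u v))
    (hp : EqOn p (fun x => balancedWeight s (φ x)) (Ioo u v)) :
    ∫ x in u..v, deriv (fun y => p y * φ y) x * φ x =
      ∫ t in φ u..φ v, deriv (fun t => balancedWeight s t * t) t * t := by
  rw [← integral_deriv_comp_mul_self (uIcc_of_le huv ▸ hφ) (contDiff_balancedWeight_mul_self s)]
  refine integral_congr_Ioo_of_le huv fun x hx => ?_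
  have hlocal : (fun y => p y * φ y) =ᶠ[𝓝 x] fun y => balancedWeight s (φ y) * φ y := by
    filter_upwards [isOpen_Ioo.mem_nhds hx] with y hy
    rw [hp hy]
  simp only [hlocal.deriv_eq]

theorem integral_deriv_mul_mul_self_eq_zero_of_left (huv : u ≤ v)
    (hφ : LipschitzOnWith K φ (Icc u v)) (hu : φ u = 0)
    (hp : EqOn p (fun x => balancedWeight (φ v) (φ x)) (Ioo u v)) :
    ∫ x in u..v, deriv (fun y => p y * φ y) x * φ x = 0 := by
  rw [integral_deriv_mul_mul_self_of_eqOn_balancedWeight huv hφ hp, hu,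
    integral_deriv_balancedWeight_mul_self]

theorem integral_deriv_mul_mul_self_eq_zero_of_right (huv : u ≤ v)
    (hφ : LipschitzOnWith K φ (Icc u v)) (hv : φ v = 0)
    (hp : EqOn p (fun x => balancedWeight (φ u) (φ x)) (Ioo u v)) :
    ∫ x in u..v, deriv (fun y => p y * φ y) x * φ x = 0 := by
  rw [integral_deriv_mul_mul_self_of_eqOn_balancedWeight huv hφ hp, hv, integral_symm,
    integral_deriv_balancedWeight_mul_self, neg_zero]

end IntegralBalanced

/-- The function `p` built from `φ`: it equals `1 / φ` on `[a, b]`, and the affine function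
`balancedWeight s` of `φ` elsewhere, where `s` is `φ a` to the left and `φ b` to the right. The
projection onto `[a, b]` selects `s` and makes a single formula serve on all three pieces. -/
noncomputable def plateauProfile (φ : ℝ → ℝ) {a b : ℝ} (hab : a ≤ b) (x : ℝ) : ℝ :=
  balancedWeight (φ (projIcc a b hab x)) (φ x)

section PlateauProfile

variable {φ : ℝ → ℝ} {a b x : ℝ}

theorem plateauProfile_of_mem (hab : a ≤ b) (hx : x ∈ Icc a b) :
    plateauProfile φ hab x = (φ x)⁻¹ := by
  rw [plateauProfile, projIcc_of_mem hab hx, balancedWeight_self]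

theorem plateauProfile_of_le_left (hab : a ≤ b) (hx : x ≤ a) :
    plateauProfile φ hab x = balancedWeight (φ a) (φ x) := by
  rw [plateauProfile, projIcc_of_le_left hab hx]

theorem plateauProfile_of_right_le (hab : a ≤ b) (hx : b ≤ x) :
    plateauProfile φ hab x = balancedWeight (φ b) (φ x) := by
  rw [plateauProfile, projIcc_of_right_le hab hx]

theorem exists_lipschitzOnWith_plateauProfile {K : ℝ≥0} {s : Set ℝ} (hs : IsCompact s)
    (hφ : LipschitzOnWith K φ s) (hab : a ≤ b) (hsub : Icc a b ⊆ s)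
    (hne : ∀ x ∈ Icc a b, φ x ≠ 0) :
    ∃ K', LipschitzOnWith K' (plateauProfile φ hab) s := by
  have hproj : LipschitzOnWith (1 * 1) (fun x => (projIcc a b hab x : ℝ)) s :=
    ((LipschitzWith.subtype_val _).comp (LipschitzWith.projIcc hab)).lipschitzOnWith
  have hpair : LipschitzOnWith (max (K * (1 * 1)) K) (fun x => (φ (projIcc a b hab x), φ x)) s :=
    (hφ.comp hproj fun x _ => hsub (projIcc a b hab x).2).prodMk hφ
  exact exists_lipschitzOnWith_comp_of_contDiffAt
    (g := fun q : ℝ × ℝ => balancedWeight q.1 q.2) hs hpair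
    fun x _ => contDiffAt_balancedWeight (hne _ (projIcc a b hab x).2)

end PlateauProfile

theorem exists_Icc_forall_ne_zero {φ : ℝ → ℝ} {l r : ℝ} (hφ : ContinuousOn φ (Icc l r))
    (hl : φ l = 0) (hr : φ r = 0) (hne : ∃ x ∈ Icc l r, φ x ≠ 0) :
    ∃ a b, l < a ∧ a < b ∧ b < r ∧ ∀ x ∈ Icc a b, φ x ≠ 0 := by
  obtain ⟨x₀, hx₀, hφx₀⟩ := hne
  have hlx : l < x₀ := hx₀.1.lt_of_ne fun h => hφx₀ (h ▸ hl)
  have hxr : x₀ < r := hx₀.2.lt_of_ne fun h => hφx₀ (h ▸ hr)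
  have hnhds : ∀ᶠ x in 𝓝 x₀, x ∈ Ioo l r ∧ φ x ≠ 0 :=
    Filter.Eventually.and (Ioo_mem_nhds hlx hxr)
      ((hφ.continuousAt (Icc_mem_nhds hlx hxr)).eventually_ne hφx₀)
  obtain ⟨ε, hε, hsub⟩ := (nhds_basis_Icc_pos x₀).eventually_iff.1 hnhds
  have hlt : x₀ - ε < x₀ + ε := by linarith
  exact ⟨x₀ - ε, x₀ + ε, (hsub (left_mem_Icc.2 hlt.le)).1.1, hlt,
    (hsub (right_mem_Icc.2 hlt.le)).1.2, fun x hx => (hsub hx).2⟩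

theorem stmt9_general {K : ℝ≥0} {l r : ℝ} {φ : ℝ → ℝ} (hφ : LipschitzOnWith K φ (Icc l r))
    (hne : ∃ x ∈ Icc l r, φ x ≠ 0) (hl : φ l = 0) (hr : φ r = 0) :
    ∃ (a b : ℝ) (p : ℝ → ℝ), l < a ∧ a < b ∧ b < r ∧
      (∃ K' : ℝ≥0, LipschitzOnWith K' p (Icc l r)) ∧
      (∃ x ∈ Ioo a b, p x ≠ 0) ∧
      (∃ c : ℝ, ∀ x ∈ Icc a b, p x * φ x = c) ∧
      IntervalIntegrable (fun x => deriv (fun y => p y * φ y) x * φ x) volume l a ∧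
      (∫ x in l..a, deriv (fun y => p y * φ y) x * φ x) = 0 ∧
      IntervalIntegrable (fun x => deriv (fun y => p y * φ y) x * φ x) volume b r ∧
      (∫ x in b..r, deriv (fun y => p y * φ y) x * φ x) = 0 := by
  obtain ⟨a, b, hla, hab, hbr, hφ_ne⟩ := exists_Icc_forall_ne_zero hφ.continuousOn hl hr hne
  have hleft : Icc l a ⊆ Icc l r := Icc_subset_Icc_right (hab.trans hbr).le
  have hright : Icc b r ⊆ Icc l r := Icc_subset_Icc_left (hla.trans hab).le
  obtain ⟨K', hp⟩ := exists_lipschitzOnWith_plateauProfile isCompact_Icc hφ hab.le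
    (Icc_subset_Icc hla.le hbr.le) hφ_ne
  have h_integrable {u v : ℝ} (huv : u ≤ v) (hsub : Icc u v ⊆ Icc l r) : IntervalIntegrable
      (fun x => deriv (fun y => plateauProfile φ hab.le y * φ y) x * φ x) volume u v := by
    rw [← uIcc_of_le huv] at hsub
    exact intervalIntegrable_deriv_mul_mul_self
      (hp.mono hsub).absolutelyContinuousOnInterval (hφ.mono hsub).absolutelyContinuousOnInterval
  obtain ⟨x, hx⟩ := nonempty_Ioo.2 hab
  refine ⟨a, b, plateauProfile φ hab.le, hla, hab, hbr, ⟨K', hp⟩, ⟨x, hx, ?_⟩, ⟨1, fun y hy => ?_⟩,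
    h_integrable hla.le hleft, ?_, h_integrable hbr.le hright, ?_⟩
  · rw [plateauProfile_of_mem hab.le (Ioo_subset_Icc_self hx)]
    exact inv_ne_zero (hφ_ne x (Ioo_subset_Icc_self hx))
  · rw [plateauProfile_of_mem hab.le hy, inv_mul_cancel₀ (hφ_ne y hy)]
  · exact integral_deriv_mul_mul_self_eq_zero_of_left hla.le (hφ.mono hleft) hl
      fun y hy => plateauProfile_of_le_left hab.le hy.2.le
  · exact integral_deriv_mul_mul_self_eq_zero_of_right hbr.le (hφ.mono hright) hr
      fun y hy => plateauProfile_of_right_le hab.le hy.1.le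

theorem stmt9 (γ γ₀ : ℝ → ℝ)
    (hγ : ContDiff ℝ 1 γ) (hγpos : ∀ x ∈ Set.Icc (0:ℝ) Real.pi, 0 < γ x)
    (hγ₀ : ContinuousOn γ₀ (Set.Icc 0 Real.pi))
    (lam : ℝ) (φ : ℝ → ℝ) (hφ : IsDirichletEF γ γ₀ lam φ) :
    ∃ (a b : ℝ) (p : ℝ → ℝ), 0 < a ∧ a < b ∧ b < Real.pi ∧
      (∃ K : NNReal, LipschitzOnWith K p (Set.Icc 0 Real.pi)) ∧
      (∃ x ∈ Set.Ioo a b, p x ≠ 0) ∧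
      (∃ c : ℝ, ∀ x ∈ Set.Icc a b, p x * φ x = c) ∧
      IntervalIntegrable (fun x => deriv (fun y => p y * φ y) x * φ x)
        MeasureTheory.volume 0 a ∧
      (∫ x in (0:ℝ)..a, deriv (fun y => p y * φ y) x * φ x) = 0 ∧
      IntervalIntegrable (fun x => deriv (fun y => p y * φ y) x * φ x)
        MeasureTheory.volume b Real.pi ∧
      (∫ x in b..Real.pi, deriv (fun y => p y * φ y) x * φ x) = 0 := by
  obtain ⟨hφ_contDiff, hne, -, h0, hπ⟩ := hφ
  obtain ⟨_, hφ_lip⟩ :=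
    hφ_contDiff.contDiffOn.exists_lipschitzOnWith two_ne_zero (convex_Icc 0 Real.pi) isCompact_Icc
  exact stmt9_general hφ_lip hne h0 hπ
end

section
/- Let 0 < a < b < π, λ ∈ ℝ, and let φ be a Dirichlet eigenfunction of 𝔏 for λ. Let p : [a,b] → ℝ be continuously differentiable such that (pφ)' = 0 on (a,b) and p(x₀) = 0 for some x₀ ∈ [a,b]. Then p is identically zero on [a,b]. -/
/-!
The product `p φ` is constant on `[a, b]` and vanishes at `x₀`, so it vanishes on `[a, b]`. If `p`
were nonzero at an interior point, then `φ` would vanish on a neighbourhood of that point, hence so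
would the Cauchy data `(φ, γ φ')`. This pair solves a linear first-order system with continuous
coefficients, so `φ` would vanish on the whole interval. Hence `p` vanishes on `(a, b)`, and by
continuity on `[a, b]`.
-/

open Set Filter Topology

section Calculus

theorem eq_of_hasDerivAt_zero_of_mem_Icc {E : Type*} [NormedAddCommGroup E] [NormedSpace ℝ E]
    {f : ℝ → E} {a b : ℝ} (hab : a < b) (hf : ContinuousOn f (Icc a b))
    (hf' : ∀ x ∈ Ioo a b, HasDerivAt f 0 x) {x y : ℝ} (hx : x ∈ Icc a b) (hy : y ∈ Icc a b) :
    f x = f y := by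
  obtain ⟨c, hc⟩ := isOpen_Ioo.exists_is_const_of_deriv_eq_zero isPreconnected_Ioo
    (fun t ht => (hf' t ht).differentiableAt.differentiableWithinAt) fun t ht => (hf' t ht).deriv
  have hconst : EqOn f (fun _ => c) (Icc a b) :=
    EqOn.of_subset_closure hc hf continuousOn_const Ioo_subset_Icc_self (closure_Ioo hab.ne).ge
  exact (hconst hx).trans (hconst hy).symm

theorem eq_zero_of_mul_eventuallyEq_zero {X R : Type*} [TopologicalSpace X] [TopologicalSpace R]
    [T1Space R] [MulZeroClass R] [NoZeroDivisors R] {f g : X → R} {x : X}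
    (hf : ContinuousAt f x) (hg : ∃ᶠ t in 𝓝 x, g t ≠ 0) (hfg : ∀ᶠ t in 𝓝 x, f t * g t = 0) :
    f x = 0 := by
  by_contra hfx
  refine hg ?_
  filter_upwards [hf.eventually_ne hfx, hfg] with t hft ht
  exact not_not.2 ((mul_eq_zero.1 ht).resolve_left hft)

end Calculus

section LinearODE

variable {E : Type*} [NormedAddCommGroup E] [NormedSpace ℝ E] {A : ℝ → E →L[ℝ] E} {f : ℝ → E}

theorem eventuallyEq_zero_of_hasDerivAt_clm {t₀ : ℝ} (hA : ContinuousAt A t₀)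
    (hf : ∀ᶠ t in 𝓝 t₀, HasDerivAt f (A t (f t)) t) (h₀ : f t₀ = 0) : f =ᶠ[𝓝 t₀] 0 := by
  have hlip : ∀ᶠ t in 𝓝 t₀, LipschitzOnWith (‖A t₀‖₊ + 1) (A t) univ := by
    filter_upwards [hA.nnnorm.eventually_lt continuousAt_const (lt_add_one ‖A t₀‖₊)] with t ht
    exact ((A t).lipschitz.weaken ht.le).lipschitzOnWith
  refine ODE_solution_unique_of_eventually (v := fun t => A t) (g := fun _ => 0) hlip
    (hf.mono fun t ht => ⟨ht, mem_univ _⟩) (Eventually.of_forall fun t => ⟨?_, mem_univ _⟩) h₀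
  simpa only [map_zero] using hasDerivAt_const t (0 : E)

theorem eqOn_zero_of_hasDerivAt_clm {s : Set ℝ} (hs : IsPreconnected s)
    (hso : IsOpen s) (hA : ContinuousOn A s) (hf : ∀ t ∈ s, HasDerivAt f (A t (f t)) t) {t₀ : ℝ}
    (ht₀ : t₀ ∈ s) (h₀ : f t₀ = 0) : EqOn f 0 s := by
  have hlocal {t : ℝ} (ht : t ∈ s) (hft : f t = 0) : f =ᶠ[𝓝 t] 0 :=
    eventuallyEq_zero_of_hasDerivAt_clm (hA.continuousAt (hso.mem_nhds ht))
      (eventually_of_mem (hso.mem_nhds ht) hf) hft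
  have hsub : s ⊆ {t | f =ᶠ[𝓝 t] 0} := by
    refine hs.subset_of_closure_inter_subset isOpen_setOfPred_eventually_nhds
      ⟨t₀, ht₀, hlocal ht₀ h₀⟩ ?_
    rintro t ⟨htcl, ht⟩
    refine hlocal ht (tendsto_nhds_unique_of_frequently_eq (hf t ht).continuousAt
      tendsto_const_nhds ?_)
    exact (mem_closure_iff_frequently.1 htcl).mono fun _ h => h.eq_of_nhds
  exact fun t ht => (hsub ht).eq_of_nhds

end LinearODE

section SturmLiouville

variable {γ γ₀ u : ℝ → ℝ} {lam : ℝ} {s : Set ℝ}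

/-- A solution on `s` of the Sturm–Liouville equation `𝔏 u = lam u`. Differentiability is required
of `u` and of its quasi-derivative `γ u'` only. -/
structure IsSLSolution (γ γ₀ : ℝ → ℝ) (lam : ℝ) (u : ℝ → ℝ) (s : Set ℝ) : Prop where
  differentiableAt : ∀ x ∈ s, DifferentiableAt ℝ u x
  differentiableAt_quasiDeriv : ∀ x ∈ s, DifferentiableAt ℝ (fun y => γ y * deriv u y) x
  SL_eq : ∀ x ∈ s, SL γ γ₀ u x = lam * u x

/-- The coefficient `(v, w) ↦ ((γ t)⁻¹ w, (γ₀ t - lam) v)` of the first-order linear system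
satisfied by the pair `(u, γ u')` when `𝔏 u = lam u`. -/
noncomputable def slSystem (γ γ₀ : ℝ → ℝ) (lam t : ℝ) : ℝ × ℝ →L[ℝ] ℝ × ℝ :=
  (γ t)⁻¹ • (.inl ℝ ℝ ℝ ∘L .snd ℝ ℝ ℝ) + (γ₀ t - lam) • (.inr ℝ ℝ ℝ ∘L .fst ℝ ℝ ℝ)

theorem slSystem_apply (γ γ₀ : ℝ → ℝ) (lam t : ℝ) (z : ℝ × ℝ) :
    slSystem γ γ₀ lam t z = ((γ t)⁻¹ * z.2, (γ₀ t - lam) * z.1) := by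
  simp [slSystem]

theorem continuousOn_slSystem (hγ : ContinuousOn γ s) (hγ_ne : ∀ x ∈ s, γ x ≠ 0)
    (hγ₀ : ContinuousOn γ₀ s) : ContinuousOn (slSystem γ γ₀ lam) s :=
  ((hγ.inv₀ hγ_ne).smul continuousOn_const).add
    ((hγ₀.sub continuousOn_const).smul continuousOn_const)

namespace IsSLSolution

theorem hasDerivAt_prodMk (hu : IsSLSolution γ γ₀ lam u s) {x : ℝ} (hx : x ∈ s) (hγx : γ x ≠ 0) :
    HasDerivAt (fun y => (u y, γ y * deriv u y))
      (slSystem γ γ₀ lam x (u x, γ x * deriv u x)) x := by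
  have hquasi : deriv (fun y => γ y * deriv u y) x = (γ₀ x - lam) * u x := by
    have hSL := hu.SL_eq x hx
    unfold SL at hSL
    linarith
  rw [slSystem_apply, inv_mul_cancel_left₀ hγx, ← hquasi]
  exact (hu.differentiableAt x hx).hasDerivAt.prodMk
    (hu.differentiableAt_quasiDeriv x hx).hasDerivAt

theorem eqOn_zero (hu : IsSLSolution γ γ₀ lam u s) (hso : IsOpen s) (hs : IsPreconnected s)
    (hγ : ContinuousOn γ s) (hγ_ne : ∀ x ∈ s, γ x ≠ 0) (hγ₀ : ContinuousOn γ₀ s) {x : ℝ}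
    (hx : x ∈ s) (hux : u x = 0) (hux' : deriv u x = 0) : EqOn u 0 s := by
  have hsystem := eqOn_zero_of_hasDerivAt_clm hs hso (continuousOn_slSystem hγ hγ_ne hγ₀)
    (fun y hy => hu.hasDerivAt_prodMk hy (hγ_ne y hy)) hx (by simp [hux, hux'])
  exact fun y hy => congrArg Prod.fst (hsystem hy)

theorem frequently_ne_zero (hu : IsSLSolution γ γ₀ lam u s) (hso : IsOpen s)
    (hs : IsPreconnected s) (hγ : ContinuousOn γ s) (hγ_ne : ∀ x ∈ s, γ x ≠ 0)
    (hγ₀ : ContinuousOn γ₀ s) (hu_ne : ∃ y ∈ s, u y ≠ 0) {x : ℝ} (hx : x ∈ s) :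
    ∃ᶠ t in 𝓝 x, u t ≠ 0 := by
  intro hzero
  have hloc : u =ᶠ[𝓝 x] fun _ => 0 := hzero.mono fun _ => not_not.1
  have hderiv : deriv u x = 0 := hloc.deriv_eq.trans (deriv_const x 0)
  obtain ⟨y, hy, huy⟩ := hu_ne
  exact huy (hu.eqOn_zero hso hs hγ hγ_ne hγ₀ hx hloc.eq_of_nhds hderiv hy)

end IsSLSolution

namespace IsDirichletEF

theorem isSLSolution (hu : IsDirichletEF γ γ₀ lam u) (hγ : Differentiable ℝ γ) :
    IsSLSolution γ γ₀ lam u (Ioo 0 Real.pi) where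
  differentiableAt x _ := hu.1.differentiable two_ne_zero x
  differentiableAt_quasiDeriv x _ := (hγ x).mul (hu.1.differentiable_deriv_two x)
  SL_eq x hx := hu.2.2.1 x (Ioo_subset_Icc_self hx)

theorem exists_mem_Ioo_ne_zero (hu : IsDirichletEF γ γ₀ lam u) :
    ∃ x ∈ Ioo 0 Real.pi, u x ≠ 0 := by
  obtain ⟨-, ⟨x, hx, hux⟩, -, hu_zero, hu_pi⟩ := hu
  have hx_zero : x ≠ 0 := fun h => hux (h ▸ hu_zero)
  have hx_pi : x ≠ Real.pi := fun h => hux (h ▸ hu_pi)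
  exact ⟨x, ⟨hx.1.lt_of_ne' hx_zero, hx.2.lt_of_ne hx_pi⟩, hux⟩

end IsDirichletEF

end SturmLiouville

theorem stmt11_general {γ γ₀ φ p : ℝ → ℝ} {lam a b x₀ : ℝ} {s : Set ℝ} (hso : IsOpen s)
    (hs : IsPreconnected s) (hγ : ContinuousOn γ s) (hγ_ne : ∀ x ∈ s, γ x ≠ 0)
    (hγ₀ : ContinuousOn γ₀ s) (hφ : IsSLSolution γ γ₀ lam φ s) (hφ_ne : ∃ x ∈ s, φ x ≠ 0)
    (hab : a < b) (habs : Icc a b ⊆ s) (hp : ContinuousOn p (Icc a b))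
    (hpφ : ∀ x ∈ Ioo a b, HasDerivAt (fun y => p y * φ y) 0 x)
    (hx₀ : x₀ ∈ Icc a b) (hpx₀ : p x₀ = 0) :
    ∀ x ∈ Icc a b, p x = 0 := by
  have hφ_cont : ContinuousOn φ (Icc a b) := fun x hx =>
    (hφ.differentiableAt x (habs hx)).continuousAt.continuousWithinAt
  have hmul_zero {x : ℝ} (hx : x ∈ Icc a b) : p x * φ x = 0 := by
    have hconst : p x * φ x = p x₀ * φ x₀ :=
      eq_of_hasDerivAt_zero_of_mem_Icc hab (hp.mul hφ_cont) hpφ hx hx₀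
    rw [hconst, hpx₀, zero_mul]
  have hinterior : EqOn p 0 (Ioo a b) := fun x hx =>
    eq_zero_of_mul_eventuallyEq_zero (hp.continuousAt (Icc_mem_nhds hx.1 hx.2))
      (hφ.frequently_ne_zero hso hs hγ hγ_ne hγ₀ hφ_ne (habs (Ioo_subset_Icc_self hx)))
      (eventually_of_mem (Icc_mem_nhds hx.1 hx.2) fun _ => hmul_zero)
  exact hinterior.of_subset_closure hp continuousOn_const Ioo_subset_Icc_self
    (closure_Ioo hab.ne).ge

theorem stmt11 (γ γ₀ : ℝ → ℝ)
    (hγ : ContDiff ℝ 1 γ) (hγpos : ∀ x ∈ Set.Icc (0:ℝ) Real.pi, 0 < γ x)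
    (hγ₀ : ContinuousOn γ₀ (Set.Icc 0 Real.pi))
    (a b : ℝ) (ha : 0 < a) (hab : a < b) (hb : b < Real.pi)
    (lam : ℝ) (φ : ℝ → ℝ) (hφ : IsDirichletEF γ γ₀ lam φ)
    (p : ℝ → ℝ) (hp : ContDiff ℝ 1 p)
    (hpφ : ∀ x ∈ Set.Ioo a b, deriv (fun y => p y * φ y) x = 0)
    (x₀ : ℝ) (hx₀ : x₀ ∈ Set.Icc a b) (hpx₀ : p x₀ = 0) :
    ∀ x ∈ Set.Icc a b, p x = 0 := by
  have hpφ_diff := (hp.differentiable one_ne_zero).mul (hφ.1.differentiable two_ne_zero)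
  exact stmt11_general isOpen_Ioo isPreconnected_Ioo hγ.continuous.continuousOn
    (fun x hx => (hγpos x (Ioo_subset_Icc_self hx)).ne') (hγ₀.mono Ioo_subset_Icc_self)
    (hφ.isSLSolution (hγ.differentiable one_ne_zero)) hφ.exists_mem_Ioo_ne_zero hab
    (Icc_subset_Ioo ha hb) hp.continuous.continuousOn
    (fun x hx => hpφ x hx ▸ (hpφ_diff x).hasDerivAt) hx₀ hpx₀
end

section
/- There exists a constant C > 0, depending only on γ and γ₀, with the following property: for every λ ≥ 1, every continuous f : [0,π] → ℝ, and every twice continuously differentiable u : [0,π] → ℝ satisfying 𝔏u = λu + f on [0,π], if one defines U(x) := (u(x), √(γ(x)/λ)·u'(x)) ∈ ℝ², then for all x, y ∈ [0,π]: ‖U(x)‖ ≤ C·( ‖U(y)‖ + | ∫_y^x |f(s)|/√(γ(s)λ) ds | ), where ‖·‖ is the Euclidean norm on ℝ². -/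
/-- The Euclidean norm of the vector `U(x) = (u x, √(γ x / lam) * u' x) ∈ ℝ²`. -/
noncomputable def Unorm (γ : ℝ → ℝ) (lam : ℝ) (u : ℝ → ℝ) (x : ℝ) : ℝ :=
  Real.sqrt ((u x) ^ 2 + (Real.sqrt (γ x / lam) * deriv u x) ^ 2)

/-!
Square the norm: `E = u² + (γ/lam) u'²`. In `E'` the terms of size `lam` cancel because of the
equation, leaving `|E'| ≤ 2 k E + 2 g √E` with `g = |f| / √(γ lam)` and a rate `k` that is bounded
uniformly in `lam ≥ lam₀ > 0`. A Gronwall argument for `√E`, run forwards and backwards, gives the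
estimate with constant `exp (k |x - y|)`.
-/

open Set MeasureTheory

section Gronwall

variable {E E' g : ℝ → ℝ} {a b k : ℝ}

theorem sqrt_le_sqrt_add_integral_of_deriv_le (hab : a ≤ b) (hEc : ContinuousOn E (Icc a b))
    (hE : ∀ t ∈ Ioo a b, HasDerivAt E (E' t) t) (hE0 : ∀ t ∈ Ioo a b, 0 ≤ E t)
    (hg : IntervalIntegrable g volume a b) (hg0 : ∀ t ∈ Ioo a b, 0 ≤ g t)
    (hE' : ∀ t ∈ Ioo a b, E' t ≤ 2 * g t * √(E t)) :
    √(E b) ≤ √(E a) + ∫ s in a..b, g s := by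
  refine le_of_forall_pos_le_add fun δ hδ ↦ ?_
  -- The shift by `δ ^ 2` makes the square root differentiable where `E` vanishes.
  have hpos : ∀ t ∈ Ioo a b, 0 < E t + δ ^ 2 := fun t ht ↦ by have := hE0 t ht; positivity
  have hderiv : ∀ t ∈ Ioo a b, E' t / (2 * √(E t + δ ^ 2)) ≤ g t := fun t ht ↦ by
    have hsqrt := Real.sqrt_pos.2 (hpos t ht)
    rw [div_le_iff₀ (by positivity)]
    calc E' t ≤ 2 * g t * √(E t) := hE' t ht
      _ ≤ 2 * g t * √(E t + δ ^ 2) := by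
        have := hg0 t ht
        gcongr
        exact le_add_of_nonneg_right (sq_nonneg δ)
      _ = g t * (2 * √(E t + δ ^ 2)) := by ring
  have hincr : √(E b + δ ^ 2) - √(E a + δ ^ 2) ≤ ∫ s in a..b, g s :=
    intervalIntegral.sub_le_integral_of_hasDeriv_right_of_le hab
      (hEc.add continuousOn_const).sqrt
      (fun t ht ↦ (((hE t ht).add_const _).sqrt (hpos t ht).ne').hasDerivWithinAt)
      ((intervalIntegrable_iff_integrableOn_Icc_of_le hab).1 hg) hderiv
  have hb : √(E b) ≤ √(E b + δ ^ 2) := Real.sqrt_le_sqrt (le_add_of_nonneg_right (sq_nonneg δ))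
  have ha : √(E a + δ ^ 2) ≤ √(E a) + δ := by
    have hEa : E a ≤ √(E a) ^ 2 := (Real.sqrt_le_left (Real.sqrt_nonneg _)).1 le_rfl
    exact Real.sqrt_le_iff.2 ⟨by positivity, by nlinarith [Real.sqrt_nonneg (E a)]⟩
  linarith

theorem sqrt_le_exp_mul_sqrt_add_integral_exp_mul (hab : a ≤ b)
    (hEc : ContinuousOn E (Icc a b)) (hE : ∀ t ∈ Ioo a b, HasDerivAt E (E' t) t)
    (hE0 : ∀ t ∈ Ioo a b, 0 ≤ E t) (hg : IntervalIntegrable g volume a b)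
    (hg0 : ∀ t ∈ Ioo a b, 0 ≤ g t)
    (hE' : ∀ t ∈ Ioo a b, E' t ≤ 2 * k * E t + 2 * g t * √(E t)) :
    √(E b) ≤ Real.exp (k * (b - a)) * √(E a) + ∫ s in a..b, Real.exp (k * (b - s)) * g s := by
  -- The integrating factor is a square, so that it passes through the square root.
  let w : ℝ → ℝ := fun t ↦ Real.exp (k * (b - t))
  have hw0 : ∀ t, 0 < w t := fun t ↦ Real.exp_pos _
  have hwc : Continuous w := by fun_prop
  have hw : ∀ t, HasDerivAt w (-k * w t) t := fun t ↦
    (((hasDerivAt_id t).const_sub b).const_mul k).exp.congr_deriv (by simp only [w, id]; ring)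
  have hsqrt : ∀ t, √(w t ^ 2 * E t) = w t * √(E t) := fun t ↦ by
    rw [Real.sqrt_mul (sq_nonneg _), Real.sqrt_sq (hw0 t).le]
  have hderiv : ∀ t ∈ Ioo a b, HasDerivAt (fun t ↦ w t ^ 2 * E t)
      (w t ^ 2 * (E' t - 2 * k * E t)) t := fun t ht ↦
    (((hw t).pow 2).mul (hE t ht)).congr_deriv (by
      simp only [Nat.cast_ofNat, Nat.add_one_sub_one, pow_one, Pi.pow_apply]
      ring)
  have hbound : ∀ t ∈ Ioo a b,
      w t ^ 2 * (E' t - 2 * k * E t) ≤ 2 * (w t * g t) * √(w t ^ 2 * E t) := fun t ht ↦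
    calc w t ^ 2 * (E' t - 2 * k * E t) ≤ w t ^ 2 * (2 * g t * √(E t)) := by
          gcongr
          linarith [hE' t ht]
      _ = 2 * (w t * g t) * √(w t ^ 2 * E t) := by rw [hsqrt]; ring
  have h := sqrt_le_sqrt_add_integral_of_deriv_le hab ((hwc.pow 2).continuousOn.mul hEc) hderiv
    (fun t ht ↦ mul_nonneg (sq_nonneg _) (hE0 t ht)) (hg.continuousOn_mul hwc.continuousOn)
    (fun t ht ↦ mul_nonneg (hw0 t).le (hg0 t ht)) hbound
  simpa [hsqrt, w] using h

theorem sqrt_le_exp_mul_sqrt_add_integral (hab : a ≤ b) (hk : 0 ≤ k)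
    (hEc : ContinuousOn E (Icc a b)) (hE : ∀ t ∈ Ioo a b, HasDerivAt E (E' t) t)
    (hE0 : ∀ t ∈ Ioo a b, 0 ≤ E t) (hg : IntervalIntegrable g volume a b)
    (hg0 : ∀ t ∈ Ioo a b, 0 ≤ g t)
    (hE' : ∀ t ∈ Ioo a b, E' t ≤ 2 * k * E t + 2 * g t * √(E t)) :
    √(E b) ≤ Real.exp (k * (b - a)) * (√(E a) + ∫ s in a..b, g s) := by
  have hweight : ∫ s in a..b, Real.exp (k * (b - s)) * g s ≤
      ∫ s in a..b, Real.exp (k * (b - a)) * g s := by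
    refine intervalIntegral.integral_mono_on_of_le_Ioo hab
      (hg.continuousOn_mul (by fun_prop)) (hg.const_mul _) fun s hs ↦ ?_
    have := hg0 s hs
    gcongr
    exact hs.1.le
  rw [intervalIntegral.integral_const_mul] at hweight
  linarith [sqrt_le_exp_mul_sqrt_add_integral_exp_mul hab hEc hE hE0 hg hg0 hE']

theorem sqrt_le_exp_mul_sqrt_add_integral_of_neg_deriv_le (hab : a ≤ b) (hk : 0 ≤ k)
    (hEc : ContinuousOn E (Icc a b)) (hE : ∀ t ∈ Ioo a b, HasDerivAt E (E' t) t)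
    (hE0 : ∀ t ∈ Ioo a b, 0 ≤ E t) (hg : IntervalIntegrable g volume a b)
    (hg0 : ∀ t ∈ Ioo a b, 0 ≤ g t)
    (hE' : ∀ t ∈ Ioo a b, -E' t ≤ 2 * k * E t + 2 * g t * √(E t)) :
    √(E a) ≤ Real.exp (k * (b - a)) * (√(E b) + ∫ s in a..b, g s) := by
  have hIoo : ∀ t ∈ Ioo (-b) (-a), -t ∈ Ioo a b := fun t ht ↦
    ⟨lt_neg_of_lt_neg ht.2, neg_lt_of_neg_lt ht.1⟩
  have hEc' : ContinuousOn (fun t ↦ E (-t)) (Icc (-b) (-a)) :=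
    hEc.comp continuousOn_neg fun t ht ↦ ⟨le_neg_of_le_neg ht.2, neg_le_of_neg_le ht.1⟩
  have hderiv : ∀ t ∈ Ioo (-b) (-a), HasDerivAt (fun t ↦ E (-t)) (-E' (-t)) t := fun t ht ↦
    ((hE _ (hIoo t ht)).comp t (hasDerivAt_neg t)).congr_deriv (mul_neg_one _)
  have h := sqrt_le_exp_mul_sqrt_add_integral (neg_le_neg hab) hk hEc' hderiv
    (fun t ht ↦ hE0 _ (hIoo t ht)) (IntervalIntegrable.iff_comp_neg (by finiteness) |>.1 hg).symm
    (fun t ht ↦ hg0 _ (hIoo t ht)) (fun t ht ↦ hE' _ (hIoo t ht))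
  simpa [intervalIntegral.integral_comp_neg, neg_add_eq_sub] using h

theorem sqrt_le_exp_mul_sqrt_add_abs_integral {x y : ℝ} (hk : 0 ≤ k)
    (hE : ∀ t ∈ uIcc y x, HasDerivAt E (E' t) t) (hE0 : ∀ t ∈ uIcc y x, 0 ≤ E t)
    (hg : IntervalIntegrable g volume y x) (hg0 : ∀ t ∈ uIcc y x, 0 ≤ g t)
    (hE' : ∀ t ∈ uIcc y x, |E' t| ≤ 2 * k * E t + 2 * g t * √(E t)) :
    √(E x) ≤ Real.exp (k * |x - y|) * (√(E y) + |∫ s in y..x, g s|) := by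
  have hEc : ContinuousOn E (uIcc y x) := fun t ht ↦ (hE t ht).continuousAt.continuousWithinAt
  rcases le_total y x with hyx | hxy
  · rw [uIcc_of_le hyx] at *
    have hI := Ioo_subset_Icc_self (a := y) (b := x)
    rw [abs_of_nonneg (sub_nonneg.2 hyx)]
    refine (sqrt_le_exp_mul_sqrt_add_integral hyx hk hEc (fun t ht ↦ hE t (hI ht))
      (fun t ht ↦ hE0 t (hI ht)) hg (fun t ht ↦ hg0 t (hI ht))
      fun t ht ↦ (le_abs_self _).trans (hE' t (hI ht))).trans ?_
    gcongr
    exact le_abs_self _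
  · rw [uIcc_of_ge hxy] at *
    have hI := Ioo_subset_Icc_self (a := x) (b := y)
    rw [abs_sub_comm, abs_of_nonneg (sub_nonneg.2 hxy), intervalIntegral.integral_symm, abs_neg]
    refine (sqrt_le_exp_mul_sqrt_add_integral_of_neg_deriv_le hxy hk hEc
      (fun t ht ↦ hE t (hI ht)) (fun t ht ↦ hE0 t (hI ht)) hg.symm (fun t ht ↦ hg0 t (hI ht))
      fun t ht ↦ (neg_le_abs _).trans (hE' t (hI ht))).trans ?_
    gcongr
    exact le_abs_self _

end Gronwall

section Energy

/-- The energy `u² + (γ / lam) u'²`, the square of `Unorm` where `0 ≤ γ / lam`. It is written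
without the inner square root, so that it is differentiable wherever `γ` and `u'` are. -/
noncomputable def slEnergy (γ : ℝ → ℝ) (lam : ℝ) (u : ℝ → ℝ) (x : ℝ) : ℝ :=
  u x ^ 2 + γ x / lam * deriv u x ^ 2

/-- A bound for the relative growth rate `|E'| / E` of the energy `E = slEnergy γ lam u` when
`𝔏 u = lam u`; it decreases in `lam`. -/
noncomputable def slRate (γ γ₀ : ℝ → ℝ) (lam x : ℝ) : ℝ :=
  |γ₀ x| / √(γ x * lam) + |deriv γ x| / γ x

variable {γ γ₀ f u : ℝ → ℝ} {lam x : ℝ}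

theorem Unorm_eq_sqrt_slEnergy (h : 0 ≤ γ x / lam) : Unorm γ lam u x = √(slEnergy γ lam u x) := by
  rw [Unorm, slEnergy, mul_pow, Real.sq_sqrt h]

theorem slEnergy_nonneg (h : 0 ≤ γ x / lam) : 0 ≤ slEnergy γ lam u x := by
  unfold slEnergy
  positivity

theorem hasDerivAt_slEnergy (hlam : lam ≠ 0) (hγ : DifferentiableAt ℝ γ x)
    (hu : DifferentiableAt ℝ u x) (hu' : DifferentiableAt ℝ (deriv u) x)
    (hSL : SL γ γ₀ u x = lam * u x + f x) :
    HasDerivAt (slEnergy γ lam u)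
      ((2 * deriv u x * (γ₀ x * u x - f x) - deriv γ x * deriv u x ^ 2) / lam) x := by
  have hflux : deriv (fun y ↦ γ y * deriv u y) x =
      deriv γ x * deriv u x + γ x * deriv (deriv u) x :=
    (hγ.hasDerivAt.mul hu'.hasDerivAt).deriv
  have hf : f x = -(deriv γ x * deriv u x + γ x * deriv (deriv u) x) + γ₀ x * u x
      - lam * u x := by
    rw [SL, hflux] at hSL
    linarith
  refine ((hu.hasDerivAt.pow 2).add
    ((hγ.hasDerivAt.div_const lam).mul (hu'.hasDerivAt.pow 2))).congr_deriv ?_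
  rw [hf]
  simp only [Nat.cast_ofNat, Nat.add_one_sub_one, pow_one, Pi.pow_apply]
  field_simp
  ring

theorem abs_two_mul_mul_sub_sub_mul_sq_le (v q α β κ : ℝ) :
    |2 * q * (α * v - β) - κ * q ^ 2| ≤
      (|α| + |κ|) * (v ^ 2 + q ^ 2) + 2 * |β| * √(v ^ 2 + q ^ 2) := by
  have hα : |2 * q * v * α| ≤ |α| * (v ^ 2 + q ^ 2) := by
    rw [abs_mul, mul_comm]
    gcongr
    exact abs_le.2 ⟨by nlinarith [sq_nonneg (q + v)], by nlinarith [sq_nonneg (q - v)]⟩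
  have hβ : |2 * q * β| ≤ 2 * |β| * √(v ^ 2 + q ^ 2) := by
    rw [mul_right_comm, abs_mul, abs_mul, abs_two]
    gcongr
    exact Real.abs_le_sqrt (le_add_of_nonneg_left (sq_nonneg v))
  have hκ : |κ * q ^ 2| ≤ |κ| * (v ^ 2 + q ^ 2) := by
    rw [abs_mul, abs_of_nonneg (sq_nonneg q)]
    gcongr
    exact le_add_of_nonneg_left (sq_nonneg v)
  calc |2 * q * (α * v - β) - κ * q ^ 2| = |2 * q * v * α - 2 * q * β - κ * q ^ 2| := by ring_nf
    _ ≤ |2 * q * v * α| + |2 * q * β| + |κ * q ^ 2| :=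
      (abs_sub _ _).trans (add_le_add_left (abs_sub _ _) _)
    _ ≤ (|α| + |κ|) * (v ^ 2 + q ^ 2) + 2 * |β| * √(v ^ 2 + q ^ 2) := by linarith

theorem abs_deriv_slEnergy_le (hlam : 0 < lam) (hγpos : 0 < γ x) (hγ : DifferentiableAt ℝ γ x)
    (hu : DifferentiableAt ℝ u x) (hu' : DifferentiableAt ℝ (deriv u) x)
    (hSL : SL γ γ₀ u x = lam * u x + f x) :
    |deriv (slEnergy γ lam u) x| ≤ slRate γ γ₀ lam x * slEnergy γ lam u x +
      2 * (|f x| / √(γ x * lam)) * √(slEnergy γ lam u x) := by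
  set r := √(γ x * lam)
  have hr : 0 < r := Real.sqrt_pos.2 (mul_pos hγpos hlam)
  have hr2 : r ^ 2 = γ x * lam := Real.sq_sqrt (mul_pos hγpos hlam).le
  -- `q` is the second component `√(γ / lam) u'` of the vector `U`.
  obtain ⟨q, hq⟩ : ∃ q, q = r / lam * deriv u x := ⟨_, rfl⟩
  have hu'q : deriv u x / lam = q / r := by rw [hq]; field_simp
  have hq2 : γ x / lam * deriv u x ^ 2 = q ^ 2 := by
    rw [hq, mul_pow, div_pow, hr2]
    field_simp
  have hderiv : (2 * deriv u x * (γ₀ x * u x - f x) - deriv γ x * deriv u x ^ 2) / lam =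
      2 * q * (γ₀ x / r * u x - f x / r) - deriv γ x / γ x * q ^ 2 :=
    calc _ = 2 * (deriv u x / lam) * (γ₀ x * u x - f x) -
          deriv γ x / γ x * (γ x / lam * deriv u x ^ 2) := by field_simp
      _ = _ := by rw [hu'q, hq2]; ring
  rw [(hasDerivAt_slEnergy hlam.ne' hγ hu hu' hSL).deriv, hderiv, slEnergy, hq2]
  refine (abs_two_mul_mul_sub_sub_mul_sq_le _ _ _ _ _).trans_eq ?_
  rw [slRate, abs_div, abs_div, abs_div, abs_of_pos hr, abs_of_pos hγpos]

theorem exists_slRate_le {s : Set ℝ} {lam₀ : ℝ} (hs : IsCompact s) (hlam₀ : 0 < lam₀)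
    (hγ : ContinuousOn γ s) (hγ' : ContinuousOn (deriv γ) s) (hγpos : ∀ x ∈ s, 0 < γ x)
    (hγ₀ : ContinuousOn γ₀ s) :
    ∃ k, ∀ lam ≥ lam₀, ∀ x ∈ s, slRate γ γ₀ lam x ≤ 2 * k := by
  have hcont : ContinuousOn (slRate γ γ₀ lam₀) s :=
    (hγ₀.abs.div (hγ.mul continuousOn_const).sqrt
      fun x hx ↦ (Real.sqrt_pos.2 (mul_pos (hγpos x hx) hlam₀)).ne').add
    (hγ'.abs.div hγ fun x hx ↦ (hγpos x hx).ne')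
  obtain ⟨M, hM⟩ := hs.bddAbove_image hcont
  refine ⟨M / 2, fun lam hlam x hx ↦ ?_⟩
  have hx0 := hγpos x hx
  calc slRate γ γ₀ lam x ≤ slRate γ γ₀ lam₀ x := by unfold slRate; gcongr
    _ ≤ M := hM (mem_image_of_mem _ hx)
    _ = 2 * (M / 2) := by ring

theorem Unorm_le_exp_mul_add_abs_integral {k y : ℝ} (hlam : 0 < lam)
    (hγpos : ∀ t ∈ uIcc y x, 0 < γ t) (hγ : ∀ t ∈ uIcc y x, DifferentiableAt ℝ γ t)
    (hu : ∀ t ∈ uIcc y x, DifferentiableAt ℝ u t)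
    (hu' : ∀ t ∈ uIcc y x, DifferentiableAt ℝ (deriv u) t)
    (hf : IntervalIntegrable (fun s ↦ |f s| / √(γ s * lam)) volume y x)
    (hSL : ∀ t ∈ uIcc y x, SL γ γ₀ u t = lam * u t + f t)
    (hk : ∀ t ∈ uIcc y x, slRate γ γ₀ lam t ≤ 2 * k) :
    Unorm γ lam u x ≤
      Real.exp (k * |x - y|) * (Unorm γ lam u y + |∫ s in y..x, |f s| / √(γ s * lam)|) := by
  have hdiv : ∀ t ∈ uIcc y x, 0 ≤ γ t / lam := fun t ht ↦ (div_pos (hγpos t ht) hlam).le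
  have hk0 : 0 ≤ k := by
    have hy := hγpos y left_mem_uIcc
    have hrate : 0 ≤ slRate γ γ₀ lam y := by unfold slRate; positivity
    linarith [hk y left_mem_uIcc]
  rw [Unorm_eq_sqrt_slEnergy (hdiv x right_mem_uIcc), Unorm_eq_sqrt_slEnergy (hdiv y left_mem_uIcc)]
  refine sqrt_le_exp_mul_sqrt_add_abs_integral hk0
    (fun t ht ↦ (hasDerivAt_slEnergy hlam.ne' (hγ t ht) (hu t ht) (hu' t ht)
      (hSL t ht)).differentiableAt.hasDerivAt)
    (fun t ht ↦ slEnergy_nonneg (hdiv t ht)) hf (fun t _ ↦ by positivity) fun t ht ↦ ?_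
  refine (abs_deriv_slEnergy_le hlam (hγpos t ht) (hγ t ht) (hu t ht) (hu' t ht)
    (hSL t ht)).trans ?_
  gcongr
  exacts [slEnergy_nonneg (hdiv t ht), hk t ht]

theorem stmt13_general {a b lam₀ : ℝ} (hlam₀ : 0 < lam₀)
    (hγ : ∀ x ∈ Icc a b, DifferentiableAt ℝ γ x) (hγ' : ContinuousOn (deriv γ) (Icc a b))
    (hγpos : ∀ x ∈ Icc a b, 0 < γ x) (hγ₀ : ContinuousOn γ₀ (Icc a b)) :
    ∃ C > (0 : ℝ), ∀ lam : ℝ, lam₀ ≤ lam →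
      ∀ f : ℝ → ℝ, IntegrableOn f (Icc a b) →
      ∀ u : ℝ → ℝ, (∀ x ∈ Icc a b, DifferentiableAt ℝ u x) →
      (∀ x ∈ Icc a b, DifferentiableAt ℝ (deriv u) x) →
      (∀ x ∈ Icc a b, SL γ γ₀ u x = lam * u x + f x) →
      ∀ x ∈ Icc a b, ∀ y ∈ Icc a b,
        Unorm γ lam u x ≤
          C * (Unorm γ lam u y + |∫ s in y..x, |f s| / √(γ s * lam)|) := by
  have hγc : ContinuousOn γ (Icc a b) := fun x hx ↦ (hγ x hx).continuousAt.continuousWithinAt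
  obtain ⟨k, hk⟩ := exists_slRate_le isCompact_Icc hlam₀ hγc hγ' hγpos hγ₀
  refine ⟨Real.exp (|k| * (b - a)), Real.exp_pos _, fun lam hlam f hf u hu hu' hSL x hx y hy ↦ ?_⟩
  have hlam0 : 0 < lam := hlam₀.trans_le hlam
  have hI : uIcc y x ⊆ Icc a b := ordConnected_Icc.uIcc_subset hy hx
  have hweight : ContinuousOn (fun s ↦ (√(γ s * lam))⁻¹) (Icc a b) :=
    (hγc.mul continuousOn_const).sqrt.inv₀
      fun s hs ↦ (Real.sqrt_pos.2 (mul_pos (hγpos s hs) hlam0)).ne'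
  have hint : IntervalIntegrable (fun s ↦ |f s| / √(γ s * lam)) volume y x :=
    (IntegrableOn.mul_continuousOn hf.abs hweight isCompact_Icc |>.mono_set hI).intervalIntegrable
  refine (Unorm_le_exp_mul_add_abs_integral hlam0 (fun t ht ↦ hγpos t (hI ht))
    (fun t ht ↦ hγ t (hI ht)) (fun t ht ↦ hu t (hI ht)) (fun t ht ↦ hu' t (hI ht)) hint
    (fun t ht ↦ hSL t (hI ht)) fun t ht ↦ hk lam hlam t (hI ht)).trans ?_
  have hdist : |x - y| ≤ b - a := Real.dist_le_of_mem_Icc hx hy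
  have hUy : 0 ≤ Unorm γ lam u y := Real.sqrt_nonneg _
  gcongr
  exact le_abs_self k

end Energy

theorem stmt13 (γ γ₀ : ℝ → ℝ)
    (hγ : ContDiff ℝ 1 γ) (hγpos : ∀ x ∈ Set.Icc (0:ℝ) Real.pi, 0 < γ x)
    (hγ₀ : ContinuousOn γ₀ (Set.Icc 0 Real.pi)) :
    ∃ C > (0:ℝ), ∀ lam : ℝ, 1 ≤ lam →
      ∀ f : ℝ → ℝ, ContinuousOn f (Set.Icc 0 Real.pi) →
      ∀ u : ℝ → ℝ, ContDiff ℝ 2 u →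
      (∀ x ∈ Set.Icc (0:ℝ) Real.pi, SL γ γ₀ u x = lam * u x + f x) →
      ∀ x ∈ Set.Icc (0:ℝ) Real.pi, ∀ y ∈ Set.Icc (0:ℝ) Real.pi,
        Unorm γ lam u x ≤
          C * (Unorm γ lam u y + |∫ s in y..x, |f s| / Real.sqrt (γ s * lam)|) := by
  obtain ⟨C, hC, h⟩ := stmt13_general one_pos (fun x _ ↦ hγ.differentiable one_ne_zero x)
    (hγ.continuous_deriv le_rfl).continuousOn hγpos hγ₀
  exact ⟨C, hC, fun lam hlam f hf u hu ↦ h lam hlam f hf.integrableOn_Icc u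
    (fun x _ ↦ hu.differentiable two_ne_zero x) (fun x _ ↦ hu.differentiable_deriv_two x)⟩
end

section
/- For every nonempty open set ω ⊆ (0,π) there exists a constant C > 0 such that for every positive integer k, ∫_ω sin²(kx) dx ≥ C. -/
/-!
Some interval `I` of length `π` meets `ω` in positive measure, so one may assume `ω ⊆ I` and write
`m = |ω|`. By the bathtub principle, `∫_ω sin²(kx) ≥ c m - ∫_I (c - sin²(kx))⁺` for every level `c`.
The last integral does not depend on `k`, because `x ↦ kx` preserves the mean of a `π`-periodic
function. The best level is `c = sin²(m/2)`; it gives the bound `(m - sin m)/2 > 0`, which is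
attained for `k = 1` by the interval of length `m` centred at a zero of `sin`.
-/

open MeasureTheory

theorem intervalIntegral_comp_intCast_mul_of_periodic {E : Type*} [NormedAddCommGroup E]
    [NormedSpace ℝ E] {f : ℝ → E} {T : ℝ} (hf : Function.Periodic f T)
    (hfi : ∀ t₁ t₂, IntervalIntegrable f volume t₁ t₂) {k : ℤ} (hk : k ≠ 0) (t : ℝ) :
    ∫ x in t..t + T, f (k * x) = ∫ x in t..t + T, f x := by
  have hk' : (k : ℝ) ≠ 0 := Int.cast_ne_zero.2 hk
  calc ∫ x in t..t + T, f (k * x)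
      = (k : ℝ)⁻¹ • ∫ x in k * t..k * t + k • T, f x := by
        rw [intervalIntegral.integral_comp_mul_left f hk', mul_add, zsmul_eq_mul]
    _ = (k : ℝ)⁻¹ • (k : ℝ) • ∫ x in t..t + T, f x := by
        rw [hf.intervalIntegral_add_zsmul_eq _ _ hfi, hf.intervalIntegral_add_eq (k * t) t,
          Int.cast_smul_eq_zsmul]
    _ = ∫ x in t..t + T, f x := inv_smul_smul₀ hk' _

theorem measureReal_mul_sub_setIntegral_posPart_le {α : Type*} [MeasurableSpace α] {μ : Measure α}
    {f : α → ℝ} {s t : Set α} (hf : IntegrableOn f t μ) (ht : μ t ≠ ⊤) (hst : s ⊆ t) (c : ℝ) :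
    μ.real s * c - ∫ x in t, (c - f x)⁺ ∂μ ≤ ∫ x in s, f x ∂μ := by
  have hs : μ s ≠ ⊤ := measure_ne_top_of_subset hst ht
  have hsub : IntegrableOn (fun x => c - f x) t μ := (integrableOn_const ht).sub hf
  have hpos : IntegrableOn (fun x => (c - f x)⁺) t μ := hsub.pos_part
  have hsplit : ∫ x in s, (c - f x) ∂μ = μ.real s * c - ∫ x in s, f x ∂μ := by
    rw [integral_sub (integrableOn_const hs (C := c)).integrable (hf.mono_set hst),
      setIntegral_const, smul_eq_mul]
  have hle : ∫ x in s, (c - f x) ∂μ ≤ ∫ x in t, (c - f x)⁺ ∂μ :=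
    calc ∫ x in s, (c - f x) ∂μ
        ≤ ∫ x in s, (c - f x)⁺ ∂μ :=
          integral_mono (hsub.mono_set hst) (hpos.mono_set hst) fun _ => le_posPart _
      _ ≤ ∫ x in t, (c - f x)⁺ ∂μ :=
          setIntegral_mono_set hpos (.of_forall fun _ => posPart_nonneg _) hst.eventuallyLE
  linarith

theorem sq_sin_le_sq_sin_of_abs_le {x r : ℝ} (hx : |x| ≤ r) (hr : r ≤ Real.pi / 2) :
    Real.sin x ^ 2 ≤ Real.sin r ^ 2 := by
  obtain ⟨hl, hu⟩ := abs_le.1 hx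
  refine sq_le_sq' ?_ (Real.sin_le_sin_of_le_of_le_pi_div_two (by linarith) hr hu)
  rw [← Real.sin_neg]
  exact Real.sin_le_sin_of_le_of_le_pi_div_two (by linarith) (by linarith) hl

theorem sq_sin_le_sq_sin_of_mem_Icc {x r : ℝ} (hr : 0 ≤ r) (hx : x ∈ Set.Icc r (Real.pi - r)) :
    Real.sin r ^ 2 ≤ Real.sin x ^ 2 := by
  rcases le_total x (Real.pi / 2) with h | h
  · exact sq_sin_le_sq_sin_of_abs_le (by rw [abs_of_nonneg hr]; exact hx.1) h
  · rw [← Real.sin_pi_sub x]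
    exact sq_sin_le_sq_sin_of_abs_le (by rw [abs_of_nonneg hr]; linarith [hx.2]) (by linarith)

theorem periodic_posPart_sub_sq_sin (c : ℝ) :
    Function.Periodic (fun x => (c - Real.sin x ^ 2)⁺) Real.pi := fun x => by
  simp only [Real.sin_add_pi, neg_sq]

theorem intervalIntegral_posPart_sq_sin_sub_sq_sin {r : ℝ} (hr₀ : 0 ≤ r) (hr : r ≤ Real.pi / 2)
    (t : ℝ) :
    ∫ x in t..t + Real.pi, (Real.sin r ^ 2 - Real.sin x ^ 2)⁺
      = 2 * r * Real.sin r ^ 2 - (r - Real.sin r * Real.cos r) := by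
  set g : ℝ → ℝ := fun x => (Real.sin r ^ 2 - Real.sin x ^ 2)⁺
  have hg : Continuous g := by fun_prop
  have hinner : ∫ x in -r..r, g x = ∫ x in -r..r, (Real.sin r ^ 2 - Real.sin x ^ 2) := by
    refine intervalIntegral.integral_congr fun x hx => posPart_of_nonneg (sub_nonneg.2 ?_)
    rw [Set.uIcc_of_le (by linarith)] at hx
    exact sq_sin_le_sq_sin_of_abs_le (abs_le.2 hx) hr
  have houter : ∫ x in r..-r + Real.pi, g x = 0 := by
    refine intervalIntegral.integral_zero_ae (.of_forall fun x hx => ?_)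
    refine posPart_of_nonpos (sub_nonpos.2 ?_)
    rw [Set.uIoc_of_le (by linarith), neg_add_eq_sub] at hx
    exact sq_sin_le_sq_sin_of_mem_Icc hr₀ (Set.Ioc_subset_Icc_self hx)
  calc ∫ x in t..t + Real.pi, g x
      = ∫ x in -r..-r + Real.pi, g x :=
        (periodic_posPart_sub_sq_sin _).intervalIntegral_add_eq t (-r)
    _ = ∫ x in -r..r, (Real.sin r ^ 2 - Real.sin x ^ 2) := by
        rw [← intervalIntegral.integral_add_adjacent_intervals (hg.intervalIntegrable _ r)
          (hg.intervalIntegrable _ _), hinner, houter, add_zero]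
    _ = 2 * r * Real.sin r ^ 2 - (r - Real.sin r * Real.cos r) := by
        rw [intervalIntegral.integral_sub (Continuous.intervalIntegrable (by fun_prop) _ _)
          (Continuous.intervalIntegrable (by fun_prop) _ _), intervalIntegral.integral_const,
          integral_sin_sq, Real.sin_neg, Real.cos_neg, smul_eq_mul]
        ring

theorem half_sub_sin_le_setIntegral_sq_sin {s : Set ℝ} {t : ℝ}
    (hs : s ⊆ Set.Ioc t (t + Real.pi)) {k : ℤ} (hk : k ≠ 0) :
    (volume.real s - Real.sin (volume.real s)) / 2 ≤ ∫ x in s, Real.sin (k * x) ^ 2 := by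
  set r := volume.real s / 2 with hr
  have hr₀ : 0 ≤ r := by positivity
  have hrpi : r ≤ Real.pi / 2 := by
    have hle : volume.real s ≤ volume.real (Set.Ioc t (t + Real.pi)) :=
      measureReal_mono hs measure_Ioc_lt_top.ne
    rw [Real.volume_real_Ioc_of_le (by linarith [Real.pi_pos])] at hle
    linarith
  have hloss : ∫ x in Set.Ioc t (t + Real.pi), (Real.sin r ^ 2 - Real.sin (k * x) ^ 2)⁺
      = 2 * r * Real.sin r ^ 2 - (r - Real.sin r * Real.cos r) := by
    rw [← intervalIntegral.integral_of_le (by linarith [Real.pi_pos]),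
      intervalIntegral_comp_intCast_mul_of_periodic (periodic_posPart_sub_sq_sin _)
        (Continuous.intervalIntegrable (by fun_prop)) hk,
      intervalIntegral_posPart_sq_sin_sub_sq_sin hr₀ hrpi]
  have hint : IntegrableOn (fun x : ℝ => Real.sin (k * x) ^ 2) (Set.Ioc t (t + Real.pi)) :=
    Continuous.integrableOn_Ioc (by fun_prop)
  have hbathtub := measureReal_mul_sub_setIntegral_posPart_le hint measure_Ioc_lt_top.ne hs
    (Real.sin r ^ 2)
  have hvol : volume.real s = 2 * r := by rw [hr]; ring
  rw [hloss, hvol] at hbathtub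
  rw [hvol, Real.sin_two_mul]
  linarith

theorem exists_measure_inter_Ioc_ne_zero {μ : Measure ℝ} {s : Set ℝ} (hs : μ s ≠ 0) {T : ℝ}
    (hT : 0 < T) : ∃ t, μ (s ∩ Set.Ioc t (t + T)) ≠ 0 := by
  by_contra! hnull
  refine hs ?_
  rw [← Set.inter_univ s, ← iUnion_Ioc_add_zsmul hT 0, Set.inter_iUnion]
  refine measure_iUnion_null fun n => ?_
  rw [add_one_zsmul, ← add_assoc]
  exact hnull _

theorem stmt16_general (ω : Set ℝ) (hω₀ : volume ω ≠ 0) (hω : volume ω ≠ ⊤) :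
    ∃ C > (0 : ℝ), ∀ k : ℕ, 0 < k → C ≤ ∫ x in ω, (Real.sin ((k : ℝ) * x)) ^ 2 := by
  obtain ⟨t, ht⟩ := exists_measure_inter_Ioc_ne_zero hω₀ Real.pi_pos
  set s := ω ∩ Set.Ioc t (t + Real.pi)
  have hs : 0 < volume.real s :=
    ENNReal.toReal_pos ht (measure_ne_top_of_subset Set.inter_subset_left hω)
  refine ⟨(volume.real s - Real.sin (volume.real s)) / 2, by linarith [Real.sin_lt hs],
    fun k hk => ?_⟩
  have hint : IntegrableOn (fun x : ℝ => Real.sin (k * x) ^ 2) ω := by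
    refine Measure.integrableOn_of_bounded (M := 1) hω (by fun_prop) (.of_forall fun x => ?_)
    rw [Real.norm_of_nonneg (sq_nonneg _)]
    exact Real.sin_sq_le_one _
  calc (volume.real s - Real.sin (volume.real s)) / 2
      ≤ ∫ x in s, Real.sin (k * x) ^ 2 :=
        mod_cast half_sub_sin_le_setIntegral_sq_sin Set.inter_subset_right
          (Int.natCast_ne_zero.2 hk.ne')
    _ ≤ ∫ x in ω, Real.sin (k * x) ^ 2 :=
        setIntegral_mono_set hint (.of_forall fun _ => sq_nonneg _)
          Set.inter_subset_left.eventuallyLE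

theorem stmt16 (ω : Set ℝ) (hωopen : IsOpen ω) (hωsub : ω ⊆ Set.Ioo 0 Real.pi)
    (hωne : ω.Nonempty) :
    ∃ C > (0:ℝ), ∀ k : ℕ, 0 < k →
      C ≤ ∫ x in ω, (Real.sin ((k : ℝ) * x)) ^ 2 :=
  stmt16_general ω (hωopen.measure_pos volume hωne).ne'
    (measure_ne_top_of_subset hωsub measure_Ioo_lt_top.ne)
end
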